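/- arXiv:1601.06501 — 4 statements merged into one kernel-verified Lean document; each statement's English description precedes it below -/
import Mathlib

section
/- Let s ∈ ℕ and α = 2, let β, g ∈ ℕ with β ≥ 4, g ≥ 4s and g ≥ ⌊s(β−1)/2⌋, and let b ≥ βgs be a prime. Then there exists a constant A > 0 (depending only on β, b, s) such that for every w ∈ ℕ, the digital net P ⊂ [0,1)^s of the paper's construction, of cardinality N = b^{gw}, satisfies ∑_{k ∈ ℕ₀^s \ {0,...,b^{βgw}−1}^s} ∑_{l ∈ P∞⊥ \ {0}} |K̂_{2,s}(k,l)| ≤ A · (log N)^{2s+1} / N^{6}. -/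
/-!
Write `a₁ > a₂` for the positions of the two leading nonzero digits of `k` (`lead`, `lead₂`, zero
if absent), put `wt k = b ^ (-(a₁ + a₂))`, and let `m = g * w`, so that `N = b ^ m`. The bound is
the product of three ingredients.

*Decay of the coefficients:* `|K̂₂(k, l)| ≤ C · wt k · wt l`. On the unit square the kernel `K₂` is a
polynomial plus `∫₀¹ (x - t)₊ (y - t)₊ dt`. Monomials and hinges `(x - t)₊` are functions whose
derivative has bounded variation (`TwoSmooth`); summing over the two leading digits of `k` produces
two successive cancellations, hence decay like `wt k` (`TwoSmooth.walsh_coeff_le`,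
`exists_Khat_bound`). In dimension `s` the coefficient is a product of one-dimensional ones
(`KhatS_eq_prod`).

*Sum over `k`:* the weights of the `k` outside the box `{0, …, b ^ (β m) - 1}ˢ` sum to
`O(m · b ^ (-β m))` (`tsum_outside_box_le`), and `β ≥ 4`.

*Sum over the dual net:* the interlaced Chen–Skriganov matrices are Hermite interpolation matrices,
so a dual vector is determined by its digits outside any admissible family of `m` positions
(`dual_eq_of_agree`). Consequently a nonzero dual vector has `∑ⱼ (a₁ + a₂) > 2 m - 2 β s`
(`dual_dist`), and the number of dual vectors with prescribed leading positions is at most a constant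
times `b ^ max (∑ⱼ a₂ - m, 0)` (via `dual_eq_of_div_eq`). Summing the weights over all positions gives
`O(m ^ (2 s) · b ^ (-2 m))` (`tsum_dual_le`).

Altogether the double sum is `O(m ^ (2 s + 1) · b ^ (-6 m))`. The estimates are carried out in
`ℝ≥0∞`, where no summability has to be checked beforehand.
-/

open scoped BigOperators

/-- The `i`-th digit (starting from `i = 0`) of the `b`-adic expansion of `k`. -/
def bdigit (b k i : ℕ) : ℕ := k / b ^ i % b

/-- The set of indices of nonzero `b`-adic digits of `k`. -/
def bsupp (b k : ℕ) : Finset ℕ := (Finset.range (k + 1)).filter fun i => bdigit b k i ≠ 0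

/-- The Hamming metric `κ(k)`: the number of nonzero `b`-adic digits of `k`. -/
def hamming (b k : ℕ) : ℕ := (bsupp b k).card

/-- The Dick metric `μ_α(k)`: the sum of the `min(v, α)` largest exponents-plus-one
`a_1 > a_2 > ⋯` of the nonzero `b`-adic digits of `k`. -/
def dick (b α k : ℕ) : ℕ := ((((bsupp b k).sort (· ≤ ·)).reverse.take α).map (· + 1)).sum

/-- Digitwise addition `k ⊕ l` modulo `b` of the `b`-adic digits. -/
def dadd (b k l : ℕ) : ℕ :=
  ∑ i ∈ Finset.range (k + l + 1), (bdigit b k i + bdigit b l i) % b * b ^ i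

/-- Digitwise subtraction `k ⊖ l` modulo `b` of the `b`-adic digits. -/
def dsub (b k l : ℕ) : ℕ :=
  ∑ i ∈ Finset.range (k + l + 1), (bdigit b k i + (b - bdigit b l i)) % b * b ^ i

/-- Hamming metric of a vector: sum over coordinates. -/
def hammingVec (b : ℕ) {s : ℕ} (k : Fin s → ℕ) : ℕ := ∑ j, hamming b (k j)

/-- Dick metric of a vector: sum over coordinates. -/
def dickVec (b α : ℕ) {s : ℕ} (k : Fin s → ℕ) : ℕ := ∑ j, dick b α (k j)

/-- The column vector of the first `n` `b`-adic digits of `k`, as a vector over `F_b = ZMod b`. -/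
def trv (b n : ℕ) (k : ℕ) : Fin n → ZMod b := fun i => (bdigit b k i.1 : ZMod b)

/-- The dual net `P⊥` of the digital net with generating matrices `C`. -/
def dualNet (b : ℕ) {s n m : ℕ} (C : Fin s → Matrix (Fin n) (Fin m) (ZMod b)) :
    Set (Fin s → ℕ) :=
  {k | (∀ j, k j < b ^ n) ∧ ∑ j, ((C j).transpose).mulVec (trv b n (k j)) = 0}

/-- The dual net `P∞⊥` of the digital net with generating matrices `C` (no upper bound
on the components of `k`). -/
def dualNetInf (b : ℕ) {s n m : ℕ} (C : Fin s → Matrix (Fin n) (Fin m) (ZMod b)) :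
    Set (Fin s → ℕ) :=
  {k | ∑ j, ((C j).transpose).mulVec (trv b n (k j)) = 0}

/-- The `h`-th point of the digital net generated by the matrices `C` over `ZMod b`:
its `j`-th coordinate is `∑_{i=1}^n ξ_i b^{-i}` with `(ξ_1,…,ξ_n)ᵀ = C_j · (η_0,…,η_{m-1})ᵀ`,
where `η` are the `b`-adic digits of `h`. -/
noncomputable def netPoint (b : ℕ) {s n m : ℕ} (C : Fin s → Matrix (Fin n) (Fin m) (ZMod b))
    (h : ℕ) : Fin s → ℝ :=
  fun j => ∑ i : Fin n,
    (((C j).mulVec (fun v : Fin m => (bdigit b h v.1 : ZMod b)) i).val : ℝ) / (b : ℝ) ^ (i.1 + 1)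

/-- Sum of the `α` largest elements of a finite set of (0-based) row indices, counted
1-based, i.e. each index `i` contributes `i + 1`. -/
def topSum (α : ℕ) (R : Finset ℕ) : ℕ := (((R.sort (· ≤ ·)).reverse.take α).map (· + 1)).sum

/-- The digital net with generating matrices `C_1,…,C_s ∈ F_b^{n×m}` is an order `α`
digital `(t,m,s)`-net: for every choice of rows `i_{j,v_j} < ⋯ < i_{j,1}` from each `C_j`
such that the 1-based indices of the `min(α, v_j)` largest chosen rows of each matrix sum
to at most `αm - t`, the chosen rows are linearly independent over `F_b`. -/
def isOrderNet (b α t m : ℕ) {s n : ℕ} (C : Fin s → Matrix (Fin n) (Fin m) (ZMod b)) : Prop :=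
  ∀ R : Fin s → Finset (Fin n),
    (∑ j, topSum α ((R j).image Fin.val)) ≤ α * m - t →
    LinearIndependent (ZMod b) fun p : Σ j : Fin s, {i : Fin n // i ∈ R j} => C p.1 p.2.1

/-- The minimum Dick metric `μ_α(P)` of the digital net with generating matrices `C`,
namely the minimum of `μ_α(k)` over nonzero elements `k` of the dual net. -/
noncomputable def minDick (b α : ℕ) {s n m : ℕ}
    (C : Fin s → Matrix (Fin n) (Fin m) (ZMod b)) : ℕ :=
  sInf (dickVec b α '' {k | k ∈ dualNet b C ∧ k ≠ 0})

/-- The minimum Hamming metric `κ(P)` of the digital net with generating matrices `C`. -/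
noncomputable def minHamming (b : ℕ) {s n m : ℕ}
    (C : Fin s → Matrix (Fin n) (Fin m) (ZMod b)) : ℕ :=
  sInf (hammingVec b '' {k | k ∈ dualNet b C ∧ k ≠ 0})

/-- The Chen–Skriganov generating matrix (for one coordinate `j`, with row parameters
`βr l = β_{j,l}`): the entry in (1-based) row `u = (l-1)w + i` and column `v` is
`binom(v-1, i-1) · β_{j,l}^{v-i}` (which vanishes when `v < i` since the binomial
coefficient is `0`). Indices here are 0-based. -/
def csMatrix (b w n : ℕ) (βr : ℕ → ZMod b) : Matrix (Fin n) (Fin n) (ZMod b) :=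
  Matrix.of fun u v =>
    (Nat.choose v.1 (u.1 % w) : ZMod b) * βr (u.1 / w) ^ (v.1 - u.1 % w)

/-- Dick's digit interlacing composition with interlacing factor `α` applied to the
generating matrices `C_1,…,C_{αs} ∈ F_b^{m×m}`: the resulting matrices
`D_1,…,D_s ∈ F_b^{αm×m}` are such that the (1-based) `(α(h-1)+i)`-th row of `D_j` is the
`h`-th row of `C_{α(j-1)+i}`. -/
def interlace {R : Type*} (α s m : ℕ) (C : Fin (α * s) → Matrix (Fin m) (Fin m) R) :
    Fin s → Matrix (Fin (α * m)) (Fin m) R :=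
  fun j => Matrix.of fun r v =>
    C ⟨α * j.1 + r.1 % α, by
        have hα : 0 < α := by
          rcases Nat.eq_zero_or_pos α with h | h
          · exact absurd r.2 (by simp [h])
          · exact h
        have h1 : α * (j.1 + 1) ≤ α * s := Nat.mul_le_mul_left α j.2
        have h2 : α * (j.1 + 1) = α * j.1 + α := by ring
        have h3 : r.1 % α < α := Nat.mod_lt _ hα
        omega⟩
      ⟨r.1 / α, by
        have hα : 0 < α := by
          rcases Nat.eq_zero_or_pos α with h | h
          · exact absurd r.2 (by simp [h])
          · exact h
        exact Nat.div_lt_of_lt_mul r.2⟩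
      v

open MeasureTheory

/-- The `i`-th (for `i ≥ 1`) `b`-adic digit `ξ_i` of a real number `x ∈ [0,1)`, using the
expansion in which infinitely many digits differ from `b - 1`. -/
noncomputable def rdigit (b : ℕ) (x : ℝ) (i : ℕ) : ℤ := ⌊x * (b : ℝ) ^ i⌋ % b

/-- The `k`-th `b`-adic Walsh function, `wal_k(x) = ω_b^{κ_0 ξ_1 + κ_1 ξ_2 + ⋯}` where
`ω_b = exp(2π√-1/b)`, `κ` are the `b`-adic digits of `k` and `ξ` those of `x`. -/
noncomputable def walsh (b k : ℕ) (x : ℝ) : ℂ :=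
  Complex.exp (2 * (Real.pi : ℂ) * Complex.I / (b : ℂ) *
    ∑ a ∈ Finset.range (k + 1), (bdigit b k a : ℂ) * (rdigit b x (a + 1) : ℂ))

/-- The `k`-th `b`-adic Walsh function on `[0,1)^s`, `wal_k(x) = ∏_j wal_{k_j}(x_j)`. -/
noncomputable def walshVec (b : ℕ) {s : ℕ} (k : Fin s → ℕ) (x : Fin s → ℝ) : ℂ :=
  ∏ j, walsh b (k j) (x j)

/-- The Bernoulli polynomial `B_r` evaluated at a real number. -/
noncomputable def bernoulliPoly (r : ℕ) (x : ℝ) : ℝ := Polynomial.aeval x (Polynomial.bernoulli r)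

/-- The reproducing kernel `K_α` of the Sobolev space `H_α`:
`K_α(x,y) = ∑_{r=0}^{α} B_r(x)B_r(y)/(r!)² + (-1)^{α+1} B_{2α}(|x-y|)/(2α)!`. -/
noncomputable def Kker (α : ℕ) (x y : ℝ) : ℝ :=
  ∑ r ∈ Finset.range (α + 1), bernoulliPoly r x * bernoulliPoly r y / ((r.factorial : ℝ)) ^ 2
    + (-1 : ℝ) ^ (α + 1) * bernoulliPoly (2 * α) |x - y| / ((2 * α).factorial : ℝ)

/-- The `(k,l)`-th Walsh coefficient of the kernel `K_α`. -/
noncomputable def Khat (b α : ℕ) (k l : ℕ) : ℂ :=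
  ∫ x in Set.Ico (0 : ℝ) 1, ∫ y in Set.Ico (0 : ℝ) 1,
    (Kker α x y : ℂ) * (starRingEnd ℂ) (walsh b k x) * walsh b l y

/-- The `(k,l)`-th Walsh coefficient of the `s`-variate kernel
`K_{α,s}(x,y) = ∏_j K_α(x_j, y_j)`. -/
noncomputable def KhatS (b α s : ℕ) (k l : Fin s → ℕ) : ℂ :=
  ∫ x in Set.univ.pi fun _ : Fin s => Set.Ico (0 : ℝ) 1,
    ∫ y in Set.univ.pi fun _ : Fin s => Set.Ico (0 : ℝ) 1,
      ((∏ j, Kker α (x j) (y j) : ℝ) : ℂ) * (starRingEnd ℂ) (walshVec b k x) * walshVec b l y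

/-- The `k`-th Walsh coefficient `b̂_r(k)` of the normalized Bernoulli polynomial `B_r/r!`. -/
noncomputable def bhat (b r k : ℕ) : ℂ :=
  ∫ x in Set.Ico (0 : ℝ) 1,
    ((bernoulliPoly r x / (r.factorial : ℝ) : ℝ) : ℂ) * (starRingEnd ℂ) (walsh b k x)

/-- The `(k,l)`-th Walsh coefficient `b̂_{r,per}(k,l)` of `(x,y) ↦ B̃_r(x-y)/r!`, where
`B̃_r` is the 1-periodic extension of the Bernoulli polynomial `B_r` from `[0,1)` to `ℝ`. -/
noncomputable def bhatPer (b r : ℕ) (k l : ℕ) : ℂ :=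
  ∫ x in Set.Ico (0 : ℝ) 1, ∫ y in Set.Ico (0 : ℝ) 1,
    ((bernoulliPoly r (Int.fract (x - y)) / (r.factorial : ℝ) : ℝ) : ℂ) *
      (starRingEnd ℂ) (walsh b k x) * walsh b l y

/-! ### Digits, lengths and shapes of natural numbers -/

lemma sum_range_mul_eq {M : Type*} [AddCommMonoid M] (b n : ℕ) (F : ℕ → M) :
    ∑ c ∈ Finset.range (b * n), F c
      = ∑ d ∈ Finset.range n, ∑ e ∈ Finset.range b, F (b * d + e) := by
  induction n with
  | zero => simp
  | succ n ih => rw [Nat.mul_succ, Finset.sum_range_add, ih, Finset.sum_range_succ]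

lemma bdigit_lt {b : ℕ} (hb : 0 < b) (k i : ℕ) : bdigit b k i < b := Nat.mod_lt _ hb

lemma bdigit_ext {b : ℕ} (hb : 1 < b) {k l : ℕ} (h : ∀ i, bdigit b k i = bdigit b l i) :
    k = l := by
  have key : ∀ n, k % b ^ n = l % b ^ n := by
    intro n
    induction n with
    | zero => simp [Nat.mod_one]
    | succ n ih =>
      have h2 : k / b ^ n % b = l / b ^ n % b := h n
      rw [Nat.mod_pow_succ, Nat.mod_pow_succ, ih, h2]
  have h1 := key (k + l)
  have h2 : k + l < b ^ (k + l) := Nat.lt_pow_self hb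
  rwa [Nat.mod_eq_of_lt (by omega), Nat.mod_eq_of_lt (by omega)] at h1

lemma bdigit_mod_pow {b n p : ℕ} (k : ℕ) (h : p < n) :
    bdigit b (k % b ^ n) p = bdigit b k p := by
  unfold bdigit
  obtain ⟨r, rfl⟩ := Nat.exists_eq_add_of_lt h
  rw [show b ^ (p + r + 1) = b ^ p * (b * b ^ r) by ring, Nat.mod_mul_right_div_self,
    Nat.mod_mul_right_mod]

lemma bdigit_eq_zero_of_lt {b n p k : ℕ} (hb : 1 < b) (hk : k < b ^ n) (h : n ≤ p) :
    bdigit b k p = 0 := by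
  unfold bdigit
  rw [Nat.div_eq_of_lt (hk.trans_le (Nat.pow_le_pow_right (by omega) h)), Nat.zero_mod]

/-- The position `a₁` (counted from one) of the leading nonzero `b`-adic digit of `k`, with value
`0` for `k = 0`. -/
def lead (b k : ℕ) : ℕ := (Nat.digits b k).length

/-- The position `a₂` (counted from one) of the second nonzero `b`-adic digit of `k` from the top,
with value `0` if there is none. -/
def lead₂ (b k : ℕ) : ℕ := lead b (k % b ^ (lead b k - 1))

lemma lt_lead_iff {b : ℕ} (hb : 1 < b) (k i : ℕ) : i < lead b k ↔ b ^ i ≤ k :=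
  Nat.lt_digits_length_iff hb k

lemma lead_le_iff {b : ℕ} (hb : 1 < b) (k i : ℕ) : lead b k ≤ i ↔ k < b ^ i :=
  Nat.digits_length_le_iff hb k

lemma lt_pow_lead {b : ℕ} (hb : 1 < b) (k : ℕ) : k < b ^ lead b k :=
  (lead_le_iff hb k _).1 le_rfl

lemma lead_pos_iff {b : ℕ} (hb : 1 < b) (k : ℕ) : 0 < lead b k ↔ k ≠ 0 := by
  rw [lt_lead_iff hb]; simp; omega

lemma lead_zero (b : ℕ) : lead b 0 = 0 := by simp [lead]

lemma lead₂_le {b : ℕ} (hb : 1 < b) (k : ℕ) : lead₂ b k ≤ lead b k - 1 := by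
  unfold lead₂
  rw [lead_le_iff hb]
  exact Nat.mod_lt _ (by positivity)

lemma lead₂_le_lead {b : ℕ} (hb : 1 < b) (k : ℕ) : lead₂ b k ≤ lead b k :=
  (lead₂_le hb k).trans (Nat.sub_le _ _)

lemma bdigit_lead_ne {b : ℕ} (hb : 1 < b) {k : ℕ} (hk : 0 < lead b k) :
    bdigit b k (lead b k - 1) ≠ 0 := by
  have h1 : b ^ (lead b k - 1) ≤ k := (lt_lead_iff hb k _).1 (by omega)
  have h2 : k < b ^ (lead b k - 1) * b := by
    have := lt_pow_lead hb k
    rwa [show lead b k = (lead b k - 1) + 1 by omega, pow_succ] at this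
  unfold bdigit
  rw [Nat.mod_eq_of_lt (Nat.div_lt_of_lt_mul h2)]
  have := Nat.div_pos h1 (by positivity)
  omega

lemma bdigit_lead₂_ne {b : ℕ} (hb : 1 < b) {k : ℕ} (hk : 0 < lead₂ b k) :
    bdigit b k (lead₂ b k - 1) ≠ 0 := by
  have h1 := lead₂_le hb k
  have h2 := bdigit_lead_ne hb (k := k % b ^ (lead b k - 1)) hk
  rw [bdigit_mod_pow] at h2
  · exact h2
  · change lead₂ b k - 1 < _
    omega

/-- Only the positions below `a₂` and the position `a₁` carry nonzero digits. -/
lemma bdigit_eq_zero {b : ℕ} (hb : 1 < b) {k p : ℕ} (h1 : lead₂ b k ≤ p)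
    (h2 : p ≠ lead b k - 1 ∨ lead b k = 0) : bdigit b k p = 0 := by
  by_cases h : lead b k ≤ p
  · exact bdigit_eq_zero_of_lt hb (lt_pow_lead hb k) h
  · have h3 : p < lead b k - 1 := by omega
    rw [← bdigit_mod_pow k h3]
    exact bdigit_eq_zero_of_lt hb (lt_pow_lead hb _) h1

/-! ### The dual net of the interlaced Chen–Skriganov matrices -/

open Polynomial in
lemma hasseDeriv_eval_eq_zero {F : Type*} [Field F] {f : F[X]} {x : F} {q r : ℕ}
    (h : (X - C x) ^ r ∣ f) (hq : q < r) : (hasseDeriv q f).eval x = 0 := by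
  obtain ⟨u, rfl⟩ := h
  rw [← taylor_coeff, taylor_mul, taylor_pow]
  have : taylor x (X - C x) = X := by simp
  rw [this, coeff_X_pow_mul', if_neg (by omega)]

open Polynomial in
lemma hasseDeriv_eval_eq {F : Type*} [Field F] (G : F[X]) (x : F) (q : ℕ) :
    (hasseDeriv q ((X - C x) ^ q * G)).eval x = G.eval x := by
  rw [← taylor_coeff, taylor_mul, taylor_pow]
  have : taylor x (X - C x) = X := by simp
  rw [this, coeff_X_pow_mul', if_pos le_rfl, Nat.sub_self, taylor_coeff_zero]

open Polynomial in
/-- Pairing a row of a Chen–Skriganov matrix with the coefficients of a polynomial evaluates one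
of its Hasse derivatives. -/
lemma hasseDeriv_eval_sum {F : Type*} [Field F] {f : F[X]} {m : ℕ} (hf : f.natDegree < m)
    (x : F) (q : ℕ) :
    (hasseDeriv q f).eval x
      = ∑ v : Fin m, ((Nat.choose v.1 q : F) * x ^ (v.1 - q)) * f.coeff v.1 := by
  rw [hasseDeriv_apply, sum_over_range' f (by simp) m hf, eval_finsetSum,
    ← Fin.sum_univ_eq_sum_range (fun i => eval x ((monomial (i - q)) (↑(i.choose q) * f.coeff i))) m]
  refine Finset.sum_congr rfl fun v _ => ?_
  rw [eval_monomial]; ring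

lemma sum_min_le (w H g : ℕ) : ∑ L ∈ Finset.range g, min w (H - L * w) ≤ H := by
  have : ∑ L ∈ Finset.range g, min w (H - L * w) = min (g * w) H := by
    induction g with
    | zero => simp
    | succ g ih => rw [Finset.sum_range_succ, ih, Nat.succ_mul]; omega
  omega

open Polynomial in
/-- Hermite interpolation: if the `J`-th Chen–Skriganov matrix contributes only its first `H J`
rows and `∑ H J` is at most the number `gw` of columns, then these rows are linearly independent.
Stated for the interlaced matrices, as uniqueness of an element of the dual net with prescribed
remaining digits. -/
lemma dual_eq_of_agree {b s β g w : ℕ} (hb : b.Prime) (hβ : 0 < β) (hw : 0 < w)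
    {βe : ℕ → ℕ → ZMod b}
    (hdist : ∀ j l j' l', j < β * s → l < g → j' < β * s → l' < g →
      βe j l = βe j' l' → j = j' ∧ l = l')
    (H : ℕ → ℕ) (hH : ∑ J ∈ Finset.range (β * s), H J ≤ g * w) {l l' : Fin s → ℕ}
    (hl : l ∈ dualNetInf b (interlace β s (g * w) fun j => csMatrix b w (g * w) (βe j.1)))
    (hl' : l' ∈ dualNetInf b (interlace β s (g * w) fun j => csMatrix b w (g * w) (βe j.1)))
    (hag : ∀ j : Fin s, ∀ p, H (β * j.1 + p % β) ≤ p / β →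
      bdigit b (l j) p = bdigit b (l' j) p) : l = l' := by
  have : Fact b.Prime := ⟨hb⟩
  set m := g * w with hm
  -- block `J`, node `L` and order `q` of the derivative attached to row `r` of the `j`-th matrix
  let nJ : Fin s × Fin (β * m) → ℕ := fun z => β * z.1.1 + z.2.1 % β
  let nL : Fin s × Fin (β * m) → ℕ := fun z => z.2.1 / β / w
  let nq : Fin s × Fin (β * m) → ℕ := fun z => z.2.1 / β % w
  let c : Fin s × Fin (β * m) → ZMod b := fun z =>
    (bdigit b (l z.1) z.2.1 : ZMod b) - (bdigit b (l' z.1) z.2.1 : ZMod b)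
  have hnJ : ∀ z, nJ z < β * s := by
    intro z
    have h1 : z.2.1 % β < β := Nat.mod_lt _ hβ
    have h2 : β * (z.1.1 + 1) ≤ β * s := Nat.mul_le_mul_left β z.1.2
    simp only [nJ]
    rw [Nat.mul_succ] at h2
    omega
  have hnL : ∀ z, nL z < g := by
    intro z
    refine Nat.div_lt_of_lt_mul ?_
    rw [mul_comm w g]
    exact Nat.div_lt_of_lt_mul z.2.2
  have hinj : ∀ z z', nJ z = nJ z' → nL z = nL z' → nq z = nq z' → z = z' := by
    rintro ⟨j, r⟩ ⟨j', r'⟩ h1 h2 h3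
    simp only [nJ, nL, nq] at h1 h2 h3
    have h4 : r.1 / β = r'.1 / β := by
      rw [← Nat.div_add_mod (r.1 / β) w, ← Nat.div_add_mod (r'.1 / β) w, h2, h3]
    have h5 : j.1 = j'.1 := by
      have := congrArg (· / β) h1
      simpa [Nat.mul_add_div hβ, Nat.div_eq_of_lt (Nat.mod_lt _ hβ)] using this
    have h6 : r.1 % β = r'.1 % β := by rw [h5] at h1; omega
    have h7 : r.1 = r'.1 := by
      rw [← Nat.div_add_mod r.1 β, ← Nat.div_add_mod r'.1 β, h4, h6]
    exact Prod.ext (Fin.ext h5) (Fin.ext h7)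
  have hnq : ∀ z, c z ≠ 0 → nq z < min w (H (nJ z) - nL z * w) := by
    intro z hz
    have h1 : z.2.1 / β < H (nJ z) := by
      by_contra hcon
      exact hz (by simp only [c]; rw [hag z.1 z.2.1 (by simpa [nJ] using hcon), sub_self])
    have h2 : nq z < w := Nat.mod_lt _ hw
    have h3 : w * nL z + nq z = z.2.1 / β := Nat.div_add_mod _ _
    rw [mul_comm] at h3
    omega
  have hpair : ∀ f : (ZMod b)[X], f.natDegree < m →
      ∑ z, c z * (hasseDeriv (nq z) f).eval (βe (nJ z) (nL z)) = 0 := by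
    intro f hf
    have e : ∀ l : Fin s → ℕ,
        l ∈ dualNetInf b (interlace β s m fun j => csMatrix b w m (βe j.1)) →
        ∑ z : Fin s × Fin (β * m), (bdigit b (l z.1) z.2.1 : ZMod b)
          * (hasseDeriv (nq z) f).eval (βe (nJ z) (nL z)) = 0 := by
      intro l hl
      have h0 : ∀ v : Fin m, ∑ z : Fin s × Fin (β * m),
          ((Nat.choose v.1 (nq z) : ZMod b) * βe (nJ z) (nL z) ^ (v.1 - nq z))
            * (bdigit b (l z.1) z.2.1 : ZMod b) = 0 := by
        intro v
        have := congrFun hl v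
        rw [Finset.sum_apply] at this
        rw [Fintype.sum_prod_type]
        exact this
      calc _ = ∑ z : Fin s × Fin (β * m), ∑ v : Fin m, f.coeff v.1 *
              (((Nat.choose v.1 (nq z) : ZMod b) * βe (nJ z) (nL z) ^ (v.1 - nq z))
            * (bdigit b (l z.1) z.2.1 : ZMod b)) := by
            refine Finset.sum_congr rfl fun z _ => ?_
            rw [hasseDeriv_eval_sum hf, Finset.mul_sum]
            exact Finset.sum_congr rfl fun v _ => by ring
        _ = 0 := by
            rw [Finset.sum_comm]
            exact Finset.sum_eq_zero fun v _ => by rw [← Finset.mul_sum, h0 v, mul_zero]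
    simp only [c, sub_mul, Finset.sum_sub_distrib]
    rw [e l hl, e l' hl', sub_zero]
  have hc : ∀ z, c z = 0 := by
    by_contra hcon
    push Not at hcon
    obtain ⟨z1, hz1⟩ := hcon
    obtain ⟨z0, hz0, hmax⟩ := Finset.exists_max_image
      (Finset.univ.filter fun z => c z ≠ 0) nq ⟨z1, by simpa using hz1⟩
    simp only [Finset.mem_filter, Finset.mem_univ, true_and] at hz0 hmax
    let S : Finset (ℕ × ℕ) := Finset.range (β * s) ×ˢ Finset.range g
    let r : ℕ × ℕ → ℕ := fun a => min w (H a.1 - a.2 * w)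
    let a0 : ℕ × ℕ := (nJ z0, nL z0)
    have ha0 : a0 ∈ S := by simp [S, a0, hnJ, hnL]
    let G : (ZMod b)[X] := ∏ a ∈ S.erase a0, (X - C (βe a.1 a.2)) ^ r a
    let x0 := βe (nJ z0) (nL z0)
    -- vanishes to order `r a` at every other node and to order exactly `nq z0` at the chosen one
    let f := (X - C x0) ^ nq z0 * G
    have hG : G.eval x0 ≠ 0 := by
      simp only [G, eval_prod, eval_pow, eval_sub, eval_X, eval_C]
      refine Finset.prod_ne_zero_iff.2 fun a ha => pow_ne_zero _ (sub_ne_zero.2 fun h => ?_)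
      rw [Finset.mem_erase] at ha
      simp only [S, Finset.mem_product, Finset.mem_range] at ha
      have := hdist _ _ _ _ (hnJ z0) (hnL z0) ha.2.1 ha.2.2 h
      exact ha.1 (Prod.ext this.1.symm this.2.symm)
    have hdeg : f.natDegree < m := by
      have h1 : f.natDegree ≤ nq z0 + ∑ a ∈ S.erase a0, r a := by
        refine natDegree_mul_le.trans (add_le_add ?_ ?_)
        · exact natDegree_pow_le.trans (by simp)
        · refine (natDegree_prod_le _ _).trans (Finset.sum_le_sum fun a _ => ?_)
          exact natDegree_pow_le.trans (by simp)
      have h2 : nq z0 < r a0 := hnq z0 hz0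
      have h3 : ∑ a ∈ S, r a ≤ m := by
        rw [Finset.sum_product]
        exact (Finset.sum_le_sum fun J _ => sum_min_le w (H J) g).trans hH
      rw [← Finset.add_sum_erase S r ha0] at h3
      omega
    have hp := hpair f hdeg
    rw [Finset.sum_eq_single z0] at hp
    · rw [hasseDeriv_eval_eq] at hp
      exact (mul_ne_zero hz0 hG) hp
    · intro z _ hz
      by_cases hcz : c z = 0
      · rw [hcz, zero_mul]
      have hq := hnq z hcz
      by_cases hnode : (nJ z, nL z) = a0
      · have e1 : nJ z = nJ z0 := congrArg Prod.fst hnode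
        have e2 : nL z = nL z0 := congrArg Prod.snd hnode
        have hlt : nq z < nq z0 :=
          lt_of_le_of_ne (hmax z hcz) fun h => hz (hinj _ _ e1 e2 h)
        rw [e1, e2, hasseDeriv_eval_eq_zero (dvd_mul_right _ _) hlt, mul_zero]
      · have hmem : (nJ z, nL z) ∈ S.erase a0 :=
          Finset.mem_erase.2 ⟨hnode, by simp [S, hnJ, hnL]⟩
        have hd : (X - C (βe (nJ z) (nL z))) ^ r (nJ z, nL z) ∣ f :=
          (Finset.dvd_prod_of_mem (fun a => (X - C (βe a.1 a.2)) ^ r a) hmem).mul_left _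
        rw [hasseDeriv_eval_eq_zero hd hq, mul_zero]
    · intro h; exact absurd (Finset.mem_univ _) h
  funext j
  refine bdigit_ext hb.one_lt fun p => ?_
  by_cases hp : p < β * m
  · have := hc (j, ⟨p, hp⟩)
    simp only [c, sub_eq_zero] at this
    rw [ZMod.natCast_eq_natCast_iff'] at this
    rwa [Nat.mod_eq_of_lt (bdigit_lt hb.pos _ _), Nat.mod_eq_of_lt (bdigit_lt hb.pos _ _)] at this
  · refine hag j p ?_
    have h1 : β * j.1 + p % β < β * s := by
      have h1 : p % β < β := Nat.mod_lt _ hβ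
      have h2 : β * (j.1 + 1) ≤ β * s := Nat.mul_le_mul_left β j.2
      rw [Nat.mul_succ] at h2
      omega
    have h2 : H (β * j.1 + p % β) ≤ m :=
      (Finset.single_le_sum (f := H) (fun _ _ => Nat.zero_le _) (Finset.mem_range.2 h1)).trans hH
    exact h2.trans ((Nat.le_div_iff_mul_le hβ).2 (by rw [mul_comm]; omega))

/-- An element of the dual net is determined by its digits at positions `β * f j` and above
(counted from `0`), if the numbers `β * f j` sum to at most `g * w`. -/
lemma dual_eq_of_div_eq {b s β g w : ℕ} (hb : b.Prime) (hβ : 0 < β) (hw : 0 < w)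
    {βe : ℕ → ℕ → ZMod b}
    (hdist : ∀ j l j' l', j < β * s → l < g → j' < β * s → l' < g →
      βe j l = βe j' l' → j = j' ∧ l = l')
    (f : Fin s → ℕ) (hf : β * ∑ j, f j ≤ g * w) {l l' : Fin s → ℕ}
    (hl : l ∈ dualNetInf b (interlace β s (g * w) fun j => csMatrix b w (g * w) (βe j.1)))
    (hl' : l' ∈ dualNetInf b (interlace β s (g * w) fun j => csMatrix b w (g * w) (βe j.1)))
    (hag : ∀ j : Fin s, l j / b ^ (β * f j) = l' j / b ^ (β * f j)) : l = l' := by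
  let H : ℕ → ℕ := fun J => if h : J / β < s then f ⟨J / β, h⟩ else 0
  have hHe : ∀ (j : Fin s) (i : ℕ), i < β → H (β * j.1 + i) = f j := by
    intro j i hi
    have : (β * j.1 + i) / β = j.1 := by rw [Nat.mul_add_div hβ, Nat.div_eq_of_lt hi, add_zero]
    simp [H, this]
  refine dual_eq_of_agree hb hβ hw hdist H ?_ hl hl' ?_
  · rw [sum_range_mul_eq, ← Fin.sum_univ_eq_sum_range
      (fun d => ∑ e ∈ Finset.range β, H (β * d + e)) s]
    refine le_trans (le_of_eq ?_) hf
    rw [Finset.mul_sum]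
    refine Finset.sum_congr rfl fun j _ => ?_
    rw [Finset.sum_congr rfl fun i hi => hHe j i (Finset.mem_range.1 hi)]
    simp
  · intro j p hp
    rw [hHe j _ (Nat.mod_lt _ hβ), Nat.le_div_iff_mul_le hβ] at hp
    obtain ⟨r, rfl⟩ := Nat.exists_eq_add_of_le hp
    unfold bdigit
    rw [pow_add, ← Nat.div_div_eq_div_mul, ← Nat.div_div_eq_div_mul, mul_comm (f j) β, hag j]

/-- Lower bound for the order-two Dick metric on the nonzero elements of the dual net. -/
lemma dual_dist {b s β g w : ℕ} (hb : b.Prime) (hβ : 2 ≤ β) (hw : 0 < w)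
    {βe : ℕ → ℕ → ZMod b}
    (hdist : ∀ j l j' l', j < β * s → l < g → j' < β * s → l' < g →
      βe j l = βe j' l' → j = j' ∧ l = l') {l : Fin s → ℕ}
    (hl : l ∈ dualNetInf b (interlace β s (g * w) fun j => csMatrix b w (g * w) (βe j.1)))
    (hl0 : l ≠ 0) :
    2 * (g * w) < ∑ j, (lead b (l j) + lead₂ b (l j)) + 2 * (β * s) := by
  by_contra hcon
  have hβ0 : 0 < β := by omega
  apply hl0
  let H : ℕ → ℕ := fun J => if h : J / β < s then
    (if J % β = (lead b (l ⟨J / β, h⟩) - 1) % β then lead b (l ⟨J / β, h⟩) / β + 1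
      else lead₂ b (l ⟨J / β, h⟩) / β + 1) else 0
  have hHe : ∀ (j : Fin s) (i : ℕ), i < β → H (β * j.1 + i) =
      if i = (lead b (l j) - 1) % β then lead b (l j) / β + 1 else lead₂ b (l j) / β + 1 := by
    intro j i hi
    have h1 : (β * j.1 + i) / β = j.1 := by rw [Nat.mul_add_div hβ0, Nat.div_eq_of_lt hi, add_zero]
    have h2 : (β * j.1 + i) % β = i := by rw [Nat.mul_add_mod, Nat.mod_eq_of_lt hi]
    simp [H, h1, h2]
  have h0 : (0 : Fin s → ℕ) ∈
      dualNetInf b (interlace β s (g * w) fun j => csMatrix b w (g * w) (βe j.1)) := by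
    have : trv b (β * (g * w)) 0 = 0 := by funext i; simp [trv, bdigit]
    simp [dualNetInf, this]
  refine dual_eq_of_agree hb hβ0 hw hdist H ?_ hl h0 ?_
  · rw [sum_range_mul_eq, ← Fin.sum_univ_eq_sum_range
      (fun d => ∑ e ∈ Finset.range β, H (β * d + e)) s]
    have hj : ∀ j : Fin s, 2 * ∑ e ∈ Finset.range β, H (β * j.1 + e)
        ≤ lead b (l j) + lead₂ b (l j) + 2 * β := by
      intro j
      rw [Finset.sum_congr rfl fun i hi => hHe j i (Finset.mem_range.1 hi)]
      have hmem : (lead b (l j) - 1) % β ∈ Finset.range β :=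
        Finset.mem_range.2 (Nat.mod_lt _ hβ0)
      rw [← Finset.add_sum_erase _ _ hmem, if_pos rfl]
      rw [Finset.sum_congr rfl fun i hi => if_neg (Finset.ne_of_mem_erase hi)]
      rw [Finset.sum_const, Finset.card_erase_of_mem hmem, Finset.card_range, smul_eq_mul]
      have h1 : lead b (l j) / β * β ≤ lead b (l j) := Nat.div_mul_le_self _ _
      have h2 : lead₂ b (l j) / β * β ≤ lead₂ b (l j) := Nat.div_mul_le_self _ _
      have h3 : lead₂ b (l j) / β ≤ lead b (l j) / β :=
        Nat.div_le_div_right (lead₂_le_lead hb.one_lt _)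
      obtain ⟨t, rfl⟩ := Nat.exists_eq_add_of_le hβ
      rw [show 2 + t - 1 = t + 1 by omega]
      generalize lead b (l j) / (2 + t) = x at *
      generalize lead₂ b (l j) / (2 + t) = y at *
      nlinarith [Nat.mul_le_mul_left t h3]
    have := Finset.sum_le_sum fun j (_ : j ∈ Finset.univ) => hj j
    rw [← Finset.mul_sum, Finset.sum_add_distrib] at this
    simp only [Finset.sum_const, Finset.card_univ, Fintype.card_fin, smul_eq_mul] at this
    have e : s * (2 * β) = 2 * (β * s) := by ring
    omega
  · intro j p hp
    have hz : bdigit b ((0 : Fin s → ℕ) j) p = 0 := by simp [bdigit]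
    rw [hz]
    rw [hHe j _ (Nat.mod_lt _ hβ0)] at hp
    refine bdigit_eq_zero hb.one_lt ?_ ?_
    · by_contra hlt
      push Not at hlt
      have h1 : p / β ≤ lead₂ b (l j) / β := Nat.div_le_div_right hlt.le
      have h3 : lead₂ b (l j) / β ≤ lead b (l j) / β :=
        Nat.div_le_div_right (lead₂_le_lead hb.one_lt _)
      split_ifs at hp <;> omega
    · left
      rintro rfl
      rw [if_pos rfl] at hp
      have h1 : (lead b (l j) - 1) / β ≤ lead b (l j) / β := Nat.div_le_div_right (Nat.sub_le _ _)
      omega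

/-! ### Weighted sums over shapes -/

open scoped ENNReal

/-- The weight `b ^ (-(a₁ + a₂))` of `k`, i.e. `b ^ (-μ₂(k))`. -/
noncomputable def wt (b k : ℕ) : ℝ≥0∞ := (b : ℝ≥0∞)⁻¹ ^ (lead b k + lead₂ b k)

/-- The constant `∑ᵢ (i + 1)ᵉ b⁻ⁱ`. -/
noncomputable def polyGeom (b e : ℕ) : ℝ≥0∞ := ∑' i : ℕ, ((i : ℝ≥0∞) + 1) ^ e * (b : ℝ≥0∞)⁻¹ ^ i

lemma polyGeom_ne_top {b : ℕ} (hb : 1 < b) (e : ℕ) : polyGeom b e ≠ ∞ := by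
  have hb' : (1 : ℝ) < b := by exact_mod_cast hb
  have hs : Summable fun i : ℕ => ((i : ℝ) + 1) ^ e * ((b : ℝ)⁻¹) ^ i := by
    have h1 : Summable fun n : ℕ => (n : ℝ) ^ e * ((b : ℝ)⁻¹) ^ n :=
      summable_pow_mul_geometric_of_norm_lt_one e (by
        rw [Real.norm_of_nonneg (by positivity)]
        exact inv_lt_one_of_one_lt₀ hb')
    have h2 := ((summable_nat_add_iff 1).2 h1).mul_left (b : ℝ)
    refine h2.congr fun i => ?_
    have : (b : ℝ) ≠ 0 := by positivity
    push_cast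
    rw [pow_succ]
    field_simp
  have h3 := hs.tsum_ofReal_ne_top
  convert h3 using 1
  unfold polyGeom
  refine tsum_congr fun i => ?_
  rw [ENNReal.ofReal_mul (by positivity), ENNReal.ofReal_pow (by positivity),
    ENNReal.ofReal_pow (by positivity), ENNReal.ofReal_inv_of_pos (by positivity),
    ENNReal.ofReal_natCast, ENNReal.ofReal_add (by positivity) (by positivity)]
  simp

lemma tsum_shift_le (b e V : ℕ) :
    ∑' i : ℕ, (((V + i + 1) ^ e : ℕ) : ℝ≥0∞) * (b : ℝ≥0∞)⁻¹ ^ (V + i)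
      ≤ ((V : ℝ≥0∞) + 1) ^ e * (b : ℝ≥0∞)⁻¹ ^ V * polyGeom b e := by
  unfold polyGeom
  rw [← ENNReal.tsum_mul_left]
  refine ENNReal.tsum_le_tsum fun i => ?_
  have h : (V + i + 1) ^ e ≤ (V + 1) ^ e * (i + 1) ^ e := by
    rw [← mul_pow]
    exact Nat.pow_le_pow_left (by nlinarith [Nat.zero_le (V * i)]) e
  have h' : (((V + i + 1) ^ e : ℕ) : ℝ≥0∞) ≤ ((V : ℝ≥0∞) + 1) ^ e * ((i : ℝ≥0∞) + 1) ^ e := by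
    exact_mod_cast h
  calc _ ≤ (((V : ℝ≥0∞) + 1) ^ e * ((i : ℝ≥0∞) + 1) ^ e) * (b : ℝ≥0∞)⁻¹ ^ (V + i) := by gcongr
    _ = _ := by rw [pow_add]; ring

/-- Summation along the fibres of `φ`. -/
lemma tsum_fiber_le {X Y : Type*} (φ : X → Y) (g : Y → ℝ≥0∞) (N : Y → ℕ)
    (hN : ∀ y, (φ ⁻¹' {y}).encard ≤ N y) : ∑' x, g (φ x) ≤ ∑' y, (N y : ℝ≥0∞) * g y := by
  rw [← ENNReal.tsum_fiberwise (fun x => g (φ x)) φ]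
  refine ENNReal.tsum_le_tsum fun y => ?_
  have : ∀ x : φ ⁻¹' {y}, g (φ x) = g y := fun x => by rw [x.2]
  rw [tsum_congr this, ENNReal.tsum_set_const]
  gcongr
  exact_mod_cast hN y

lemma tsum_pi_le {s : ℕ} (f : Fin s → ℕ → ℝ≥0∞) :
    ∑' k : Fin s → ℕ, ∏ j, f j (k j) ≤ ∏ j, ∑' x, f j x := by
  rw [ENNReal.tsum_eq_iSup_sum]
  refine iSup_le fun S => ?_
  calc ∑ k ∈ S, ∏ j, f j (k j)
      ≤ ∑ k ∈ Fintype.piFinset fun j => S.image fun k => k j, ∏ j, f j (k j) := by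
        refine Finset.sum_le_sum_of_subset fun k hk => ?_
        rw [Fintype.mem_piFinset]
        exact fun j => Finset.mem_image_of_mem _ hk
    _ = ∏ j, ∑ x ∈ S.image (fun k => k j), f j x := (Finset.prod_univ_sum _ _).symm
    _ ≤ _ := Finset.prod_le_prod' fun j _ => ENNReal.sum_le_tsum _

lemma natCast_pow_mul_inv_pow {b : ℕ} (hb : 1 < b) (n : ℕ) :
    (b : ℝ≥0∞) ^ n * (b : ℝ≥0∞)⁻¹ ^ n = 1 := by
  rw [← mul_pow, ENNReal.mul_inv_cancel (by simp; omega) (by simp), one_pow]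

lemma div_lead_lt {b : ℕ} (hb : 1 < b) (k : ℕ) : k / b ^ (lead b k - 1) < b := by
  refine Nat.div_lt_of_lt_mul ((lt_pow_lead hb k).trans_le ?_)
  rw [← pow_succ]
  exact Nat.pow_le_pow_right (by omega) (by omega)

/-- The tail of the one-dimensional weight sum over integers with leading position at least `V`. -/
lemma tsum_wt_le {b : ℕ} (hb : 1 < b) (V : ℕ) :
    ∑' k, (if V ≤ lead b k then wt b k else 0)
      ≤ b * (((V : ℝ≥0∞) + 1) ^ 1 * (b : ℝ≥0∞)⁻¹ ^ V * polyGeom b 1) := by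
  let X := {k : ℕ | V ≤ lead b k}
  have h0 : ∑' k, (if V ≤ lead b k then wt b k else 0) = ∑' k : X, wt b k.1 := by
    rw [tsum_subtype]
    exact tsum_congr fun k => by simp [Set.indicator, X]
  rw [h0]
  let φ : X → Σ i : ℕ, Fin (V + i + 1) := fun k => ⟨lead b k.1 - V, ⟨lead₂ b k.1, by
    have h1 : V ≤ lead b k.1 := k.2
    have := lead₂_le_lead hb k.1
    omega⟩⟩
  let g : (Σ i : ℕ, Fin (V + i + 1)) → ℝ≥0∞ := fun y => (b : ℝ≥0∞)⁻¹ ^ (V + y.1 + y.2.1)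
  have hg : ∀ k : X, wt b k.1 = g (φ k) := by
    intro k
    have h1 : V ≤ lead b k.1 := k.2
    simp only [g, φ, wt]
    congr 1
    omega
  rw [tsum_congr hg]
  refine (tsum_fiber_le φ g (fun y => b * b ^ y.2.1) ?_).trans ?_
  · rintro ⟨i, a⟩
    let ψ : X → ℕ × ℕ := fun k => (k.1 / b ^ (V + i - 1), k.1 % b ^ (V + i - 1))
    have hmaps : Set.MapsTo ψ (φ ⁻¹' {⟨i, a⟩})
        ((Finset.range b ×ˢ Finset.range (b ^ a.1) : Finset (ℕ × ℕ)) : Set (ℕ × ℕ)) := by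
      rintro k hk
      have h1 : V ≤ lead b k.1 := k.2
      simp only [Set.mem_preimage, Set.mem_singleton_iff, φ] at hk
      obtain ⟨h2, h3⟩ := Sigma.mk.inj_iff.1 hk
      subst h2
      have h4 : lead₂ b k.1 = a.1 := congrArg Fin.val (eq_of_heq h3)
      have h5 : V + (lead b k.1 - V) = lead b k.1 := by omega
      simp only [ψ, h5, Finset.coe_product, Set.mem_prod, Finset.coe_range, Set.mem_Iio]
      refine ⟨div_lead_lt hb _, ?_⟩
      rw [← h4]
      exact lt_pow_lead hb _
    have hinj : Set.InjOn ψ (φ ⁻¹' {⟨i, a⟩}) := by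
      rintro k _ k' _ h
      simp only [ψ, Prod.mk.injEq] at h
      apply Subtype.ext
      rw [← Nat.div_add_mod k.1 (b ^ (V + i - 1)), ← Nat.div_add_mod k'.1 (b ^ (V + i - 1)),
        h.1, h.2]
    refine (Set.encard_le_encard_of_injOn hmaps hinj).trans ?_
    rw [Set.encard_coe_eq_coe_finsetCard]
    simp
  · rw [ENNReal.tsum_sigma']
    refine le_trans ?_ (mul_le_mul_right (tsum_shift_le b 1 V) (b : ℝ≥0∞))
    rw [← ENNReal.tsum_mul_left]
    refine ENNReal.tsum_le_tsum fun i => ?_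
    rw [tsum_fintype]
    have : ∀ a : Fin (V + i + 1), ((b * b ^ a.1 : ℕ) : ℝ≥0∞) * g ⟨i, a⟩
        = b * (b : ℝ≥0∞)⁻¹ ^ (V + i) := by
      intro a
      simp only [g]
      rw [pow_add _ (V + i), Nat.cast_mul, Nat.cast_pow]
      calc _ = (b : ℝ≥0∞) * (b : ℝ≥0∞)⁻¹ ^ (V + i) *
            ((b : ℝ≥0∞) ^ a.1 * (b : ℝ≥0∞)⁻¹ ^ a.1) := by ring
        _ = _ := by rw [natCast_pow_mul_inv_pow hb, mul_one]
    rw [Finset.sum_congr rfl fun a _ => this a]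
    simp only [Finset.sum_const, Finset.card_univ, Fintype.card_fin, pow_one, nsmul_eq_mul]
    exact le_of_eq (by ring)

/-- The weight sum over all vectors outside the box `{0, …, bⁿ - 1}ˢ`. -/
lemma tsum_outside_box_le {b : ℕ} (hb : 1 < b) (s n : ℕ) :
    ∑' k : {k : Fin s → ℕ // ¬ ∀ j, k j < b ^ n}, ∏ j, wt b (k.1 j)
      ≤ s * ((b * (((n + 1 : ℕ) + 1) ^ 1 * (b : ℝ≥0∞)⁻¹ ^ (n + 1) * polyGeom b 1))
          * (b * polyGeom b 1) ^ (s - 1)) := by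
  let f : Fin s → Fin s → ℕ → ℝ≥0∞ := fun j i x =>
    if i = j then (if n + 1 ≤ lead b x then wt b x else 0)
      else (if 0 ≤ lead b x then wt b x else 0)
  calc _ ≤ ∑' k : {k : Fin s → ℕ // ¬ ∀ j, k j < b ^ n}, ∑ j, ∏ i, f j i (k.1 i) := by
        refine ENNReal.tsum_le_tsum fun k => ?_
        obtain ⟨j, hj⟩ := not_forall.1 k.2
        refine le_trans (le_of_eq ?_) (Finset.single_le_sum (fun _ _ => zero_le) (Finset.mem_univ j))
        refine Finset.prod_congr rfl fun i _ => ?_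
        by_cases hi : i = j
        · subst hi
          have : n + 1 ≤ lead b (k.1 i) := by
            rw [Nat.succ_le_iff, lt_lead_iff hb]; omega
          simp only [f, if_true, if_pos this]
        · simp [f, hi]
    _ ≤ ∑' k : Fin s → ℕ, ∑ j, ∏ i, f j i (k i) :=
        ENNReal.tsum_comp_le_tsum_of_injective Subtype.val_injective
          (fun k : Fin s → ℕ => ∑ j, ∏ i, f j i (k i))
    _ = ∑ j, ∑' k : Fin s → ℕ, ∏ i, f j i (k i) := by
        rw [Summable.tsum_finsetSum fun _ _ => ENNReal.summable]
    _ ≤ ∑ j : Fin s, ((b * (((n + 1 : ℕ) + 1) ^ 1 * (b : ℝ≥0∞)⁻¹ ^ (n + 1) * polyGeom b 1))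
          * (b * polyGeom b 1) ^ (s - 1)) := by
        refine Finset.sum_le_sum fun j _ => (tsum_pi_le _).trans ?_
        rw [← Finset.mul_prod_erase _ _ (Finset.mem_univ j)]
        refine mul_le_mul' ?_ ?_
        · simp only [f, if_true]
          exact tsum_wt_le hb (n + 1)
        · have hc : (Finset.univ.erase j).card = s - 1 := by
            rw [Finset.card_erase_of_mem (Finset.mem_univ j), Finset.card_univ, Fintype.card_fin]
          rw [← hc]
          refine Finset.prod_le_pow_card _ _ _ fun i hi => ?_
          simp only [f, if_neg (Finset.ne_of_mem_erase hi)]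
          refine (tsum_wt_le hb 0).trans (le_of_eq ?_)
          simp
    _ = _ := by simp

lemma exists_le_sum_eq {s : ℕ} (q : Fin s → ℕ) (M : ℕ) (hM : M ≤ ∑ j, q j) :
    ∃ f : Fin s → ℕ, (∀ j, f j ≤ q j) ∧ ∑ j, f j = M := by
  induction M with
  | zero => exact ⟨0, by simp, by simp⟩
  | succ M ih =>
    obtain ⟨f, h1, h2⟩ := ih (by omega)
    have : ∃ j, f j < q j := by
      by_contra hcon
      push Not at hcon
      have := Finset.sum_le_sum fun j (_ : j ∈ Finset.univ) => hcon j
      omega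
    obtain ⟨j, hj⟩ := this
    refine ⟨f + Pi.single j 1, fun i => ?_, ?_⟩
    · by_cases hi : i = j
      · subst hi; simp; omega
      · simp [hi, h1 i]
    · simp [Finset.sum_add_distrib, h2]

/-- Choice of the numbers of free low digits: as many as possible, up to an additive constant. -/
lemma exists_free {s β m : ℕ} (hβ : 0 < β) (a : Fin s → ℕ) :
    ∃ f : Fin s → ℕ, (∀ j, β * f j ≤ a j) ∧ β * ∑ j, f j ≤ m ∧
      ∑ j, a j ≤ β * ∑ j, f j + (∑ j, a j - m) + β * (s + 1) := by
  obtain ⟨f, h1, h2⟩ := exists_le_sum_eq (fun j => a j / β) (min (m / β) (∑ j, a j / β))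
    (min_le_right _ _)
  have hm := Nat.div_add_mod m β
  have hm' := Nat.mod_lt m hβ
  have hF : ∑ j, a j ≤ β * ∑ j, a j / β + s * β := by
    rw [Finset.mul_sum]
    have : ∑ _j : Fin s, β = s * β := by simp
    rw [← this, ← Finset.sum_add_distrib]
    refine Finset.sum_le_sum fun j _ => ?_
    have := Nat.div_add_mod (a j) β
    have := Nat.mod_lt (a j) hβ
    omega
  refine ⟨f, fun j => ?_, ?_, ?_⟩
  · exact (Nat.mul_le_mul_left β (h1 j)).trans (Nat.mul_div_le _ _)
  · rw [h2]
    exact (Nat.mul_le_mul_left β (min_le_left _ _)).trans (Nat.mul_div_le _ _)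
  · rw [h2]
    have e : β * (s + 1) = s * β + β := by ring
    rcases le_total (m / β) (∑ j, a j / β) with h | h
    · rw [min_eq_left h]; omega
    · rw [min_eq_right h]; omega

/-- The weight sum over the nonzero elements of the dual net, of order `m^{2s} b^{-2m}` for
`m = gw`. Elements are grouped by shape, i.e. by the two leading positions in every coordinate. -/
lemma tsum_dual_le {b s β g w : ℕ} (hb : b.Prime) (hβ : 2 ≤ β) (hw : 0 < w)
    {βe : ℕ → ℕ → ZMod b}
    (hdist : ∀ j l j' l', j < β * s → l < g → j' < β * s → l' < g →
      βe j l = βe j' l' → j = j' ∧ l = l') :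
    ∑' l : {l : Fin s → ℕ //
            l ∈ dualNetInf b (interlace β s (g * w) fun j => csMatrix b w (g * w) (βe j.1)) ∧
            l ≠ 0}, ∏ j, wt b (l.1 j)
      ≤ (b : ℝ≥0∞) ^ (s + β * (s + 1)) *
        (((2 * (g * w) - 2 * (β * s) : ℕ) + 1) ^ (2 * s)
          * (b : ℝ≥0∞)⁻¹ ^ (2 * (g * w) - 2 * (β * s)) * polyGeom b (2 * s)) := by
  have hb1 := hb.one_lt
  have hβ0 : 0 < β := by omega
  set m := g * w with hm
  set V := 2 * m - 2 * (β * s) with hV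
  let Y := {a : Fin s → ℕ × ℕ // (∀ j, (a j).2 ≤ (a j).1 - 1) ∧
    2 * m < ∑ j, ((a j).1 + (a j).2) + 2 * (β * s)}
  let φ : {l : Fin s → ℕ //
            l ∈ dualNetInf b (interlace β s m fun j => csMatrix b w m (βe j.1)) ∧
            l ≠ 0} → Y := fun l => ⟨fun j => (lead b (l.1 j), lead₂ b (l.1 j)),
              fun j => lead₂_le hb1 _, dual_dist hb hβ hw hdist l.2.1 l.2.2⟩
  let g₁ : Y → ℝ≥0∞ := fun a => (b : ℝ≥0∞)⁻¹ ^ (∑ j, ((a.1 j).1 + (a.1 j).2))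
  have hg₁ : ∀ l, ∏ j, wt b (l.1 j) = g₁ (φ l) := by
    intro l
    simp only [g₁, φ, wt, Finset.prod_pow_eq_pow_sum]
  rw [tsum_congr hg₁]
  refine (tsum_fiber_le φ g₁
    (fun a => b ^ (s + β * (s + 1) + (∑ j, (a.1 j).2 - m))) ?_).trans ?_
  · rintro ⟨a, ha, haT⟩
    obtain ⟨f, hf1, hf2, hf3⟩ := exists_free (m := m) hβ0 fun j => (a j).2
    let ψ : {l : Fin s → ℕ //
            l ∈ dualNetInf b (interlace β s m fun j => csMatrix b w m (βe j.1)) ∧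
            l ≠ 0} → Fin s → ℕ × ℕ := fun l j =>
        (l.1 j / b ^ ((a j).1 - 1), l.1 j % b ^ ((a j).1 - 1) / b ^ (β * f j))
    let R : Finset (Fin s → ℕ × ℕ) := Fintype.piFinset fun j =>
      Finset.range b ×ˢ Finset.range (b ^ ((a j).2 - β * f j))
    have hmaps : Set.MapsTo ψ (φ ⁻¹' {⟨a, ha, haT⟩}) (R : Set (Fin s → ℕ × ℕ)) := by
      intro l hl
      have hl' : ∀ j, (lead b (l.1 j), lead₂ b (l.1 j)) = a j :=
        fun j => congrFun (congrArg Subtype.val hl) j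
      simp only [R, Finset.mem_coe, Fintype.mem_piFinset, Finset.mem_product, Finset.mem_range, ψ]
      intro j
      have h1 : (a j).1 = lead b (l.1 j) := by rw [← hl' j]
      have h2 : (a j).2 = lead₂ b (l.1 j) := by rw [← hl' j]
      refine ⟨by rw [h1]; exact div_lead_lt hb1 _, ?_⟩
      refine Nat.div_lt_of_lt_mul ?_
      rw [← pow_add, Nat.add_sub_cancel' (hf1 j), h1, h2]
      exact lt_pow_lead hb1 _
    have hinj : Set.InjOn ψ (φ ⁻¹' {⟨a, ha, haT⟩}) := by
      intro l _ l' _ h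
      apply Subtype.ext
      refine dual_eq_of_div_eq hb hβ0 hw hdist f hf2 l.2.1 l'.2.1 fun j => ?_
      have hj := congrFun h j
      simp only [ψ, Prod.mk.injEq] at hj
      have hle : β * f j ≤ (a j).1 - 1 := (hf1 j).trans (ha j)
      have key : ∀ x : ℕ, x / b ^ (β * f j) = b ^ ((a j).1 - 1 - β * f j) * (x / b ^ ((a j).1 - 1))
          + x % b ^ ((a j).1 - 1) / b ^ (β * f j) := by
        intro x
        conv_lhs => rw [← Nat.div_add_mod x (b ^ ((a j).1 - 1)),
          show b ^ ((a j).1 - 1) = b ^ (β * f j) * b ^ ((a j).1 - 1 - β * f j) by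
            rw [← pow_add, Nat.add_sub_cancel' hle], mul_assoc]
        rw [Nat.mul_add_div (by have := hb.pos; positivity)]
        rw [← pow_add, Nat.add_sub_cancel' hle]
      rw [key, key (l'.1 j), hj.1, hj.2]
    refine (Set.encard_le_encard_of_injOn hmaps hinj).trans ?_
    rw [Set.encard_coe_eq_coe_finsetCard]
    have hcard : R.card ≤ b ^ (s + β * (s + 1) + (∑ j, (a j).2 - m)) := by
      have e1 : R.card = b ^ (∑ j, (1 + ((a j).2 - β * f j))) := by
        simp only [R, Fintype.card_piFinset, Finset.card_product, Finset.card_range]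
        rw [← Finset.prod_pow_eq_pow_sum]
        exact Finset.prod_congr rfl fun j _ => by rw [pow_add, pow_one]
      rw [e1]
      refine Nat.pow_le_pow_right hb.pos ?_
      rw [Finset.sum_add_distrib, Finset.sum_tsub_distrib _ fun j _ => hf1 j, ← Finset.mul_sum]
      simp only [Finset.sum_const, Finset.card_univ, Fintype.card_fin, smul_eq_mul, mul_one]
      omega
    exact_mod_cast hcard
  -- total weight of a shape is at most a constant times `b ^ (-v)`
  let v : Y → ℕ := fun a => ∑ j, (a.1 j).1 + min (∑ j, (a.1 j).2) m
  have hAF : ∀ a : Y, ∑ j, (a.1 j).2 ≤ ∑ j, (a.1 j).1 := fun a =>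
    Finset.sum_le_sum fun j _ => (a.2.1 j).trans (Nat.sub_le _ _)
  have hvV : ∀ a : Y, V ≤ v a := by
    intro a
    have h1 := hAF a
    have h2 := a.2.2
    rw [Finset.sum_add_distrib] at h2
    simp only [v]
    omega
  have hterm : ∀ a : Y, ((b ^ (s + β * (s + 1) + (∑ j, (a.1 j).2 - m)) : ℕ) : ℝ≥0∞) * g₁ a
      = (b : ℝ≥0∞) ^ (s + β * (s + 1)) * (b : ℝ≥0∞)⁻¹ ^ (V + (v a - V)) := by
    intro a
    have e : ∑ j, ((a.1 j).1 + (a.1 j).2) = (∑ j, (a.1 j).2 - m) + (V + (v a - V)) := by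
      have := hvV a
      rw [Nat.add_sub_cancel' this, Finset.sum_add_distrib]
      simp only [v]
      omega
    simp only [g₁]
    rw [e, Nat.cast_pow, pow_add, pow_add _ (∑ j, (a.1 j).2 - m)]
    calc _ = (b : ℝ≥0∞) ^ (s + β * (s + 1)) * (b : ℝ≥0∞)⁻¹ ^ (V + (v a - V)) *
          ((b : ℝ≥0∞) ^ (∑ j, (a.1 j).2 - m) * (b : ℝ≥0∞)⁻¹ ^ (∑ j, (a.1 j).2 - m)) := by ring
      _ = _ := by rw [natCast_pow_mul_inv_pow hb1, mul_one]
  rw [tsum_congr hterm, ENNReal.tsum_mul_left]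
  gcongr
  refine (tsum_fiber_le (fun a : Y => v a - V) (fun i => (b : ℝ≥0∞)⁻¹ ^ (V + i))
    (fun i => (V + i + 1) ^ (2 * s)) fun i => ?_).trans (tsum_shift_le b (2 * s) V)
  let R : Finset (Fin s → ℕ × ℕ) := Fintype.piFinset fun _ =>
    Finset.range (V + i + 1) ×ˢ Finset.range (V + i + 1)
  have hmaps : Set.MapsTo (Subtype.val : Y → _) ((fun a : Y => v a - V) ⁻¹' {i})
      (R : Set (Fin s → ℕ × ℕ)) := by
    intro a hi
    simp only [Set.mem_preimage, Set.mem_singleton_iff] at hi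
    simp only [R, Finset.mem_coe, Fintype.mem_piFinset, Finset.mem_product, Finset.mem_range]
    intro j
    have h1 : (a.1 j).1 ≤ ∑ j, (a.1 j).1 :=
      Finset.single_le_sum (f := fun j => (a.1 j).1) (fun _ _ => Nat.zero_le _) (Finset.mem_univ j)
    have h2 := hvV a
    have h3 := a.2.1 j
    simp only [v] at h2 hi
    omega
  refine (Set.encard_le_encard_of_injOn hmaps Subtype.val_injective.injOn).trans ?_
  rw [Set.encard_coe_eq_coe_finsetCard]
  have : R.card = (V + i + 1) ^ (2 * s) := by
    simp only [R, Fintype.card_piFinset, Finset.card_product, Finset.card_range,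
      Finset.prod_const, Finset.card_univ, Fintype.card_fin]
    rw [pow_mul, sq]
  rw [this]

/-! ### Discrete Walsh sums -/

/-- The primitive root of unity `ω_b`. -/
noncomputable def zeta (b : ℕ) : ℂ := Complex.exp (2 * Real.pi * Complex.I / b)

lemma zeta_prim {b : ℕ} (hb : 1 < b) : IsPrimitiveRoot (zeta b) b :=
  Complex.isPrimitiveRoot_exp b (by omega)

lemma norm_zeta_pow {b : ℕ} (hb : 1 < b) (n : ℕ) : ‖zeta b ^ n‖ = 1 := by
  rw [norm_pow, (zeta_prim hb).norm'_eq_one (by omega), one_pow]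

lemma sum_zeta_eq_zero {b κ : ℕ} (hb : 1 < b) (h0 : κ ≠ 0) (h1 : κ < b) :
    ∑ e ∈ Finset.range b, zeta b ^ (κ * e) = 0 := by
  have hne : zeta b ^ κ ≠ 1 := (zeta_prim hb).pow_ne_one_of_pos_of_lt h0 h1
  have h2 := mul_geom_sum (zeta b ^ κ) b
  rw [← pow_mul, mul_comm κ b, pow_mul, (zeta_prim hb).pow_eq_one, one_pow, sub_self] at h2
  simp only [pow_mul]
  exact (mul_eq_zero.1 h2).resolve_left (sub_ne_zero.2 hne)

/-- The value of the `k`-th Walsh function on the cell `[c b^{-L}, (c+1) b^{-L})`, when `k` has at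
most `L` digits. -/
noncomputable def walshCell (b k L c : ℕ) : ℂ :=
  ∏ a ∈ Finset.range L, zeta b ^ (bdigit b k a * (c / b ^ (L - 1 - a)))

lemma norm_walshCell {b : ℕ} (hb : 1 < b) (k L c : ℕ) : ‖walshCell b k L c‖ = 1 := by
  unfold walshCell
  rw [norm_prod]
  exact Finset.prod_eq_one fun a _ => norm_zeta_pow hb _

lemma walshCell_succ {b : ℕ} (k L d : ℕ) {e : ℕ} (he : e < b) :
    walshCell b k (L + 1) (b * d + e) = walshCell b k L d * zeta b ^ (bdigit b k L * e) := by
  have hb : 0 < b := by omega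
  unfold walshCell
  rw [Finset.prod_range_succ]
  congr 1
  · refine Finset.prod_congr rfl fun a ha => ?_
    rw [Finset.mem_range] at ha
    congr 2
    rw [show L + 1 - 1 - a = (L - 1 - a) + 1 by omega, pow_succ', ← Nat.div_div_eq_div_mul,
      Nat.mul_add_div hb, Nat.div_eq_of_lt he, add_zero]
  · have h1 : L + 1 - 1 - L = 0 := by omega
    rw [h1, pow_zero, Nat.div_one, Nat.mul_add, pow_add]
    rcases Nat.lt_or_ge 1 b with hb1 | hb1
    · rw [show bdigit b k L * (b * d) = b * (bdigit b k L * d) by ring, pow_mul,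
        (zeta_prim hb1).pow_eq_one, one_pow, one_mul]
    · have : bdigit b k L = 0 := by
        have := bdigit_lt hb k L; omega
      simp [this]

lemma walshCell_skip {b : ℕ} (k L r c : ℕ) (h : ∀ a, L ≤ a → a < L + r → bdigit b k a = 0) :
    walshCell b k (L + r) c = walshCell b k L (c / b ^ r) := by
  unfold walshCell
  rw [Finset.prod_range_add]
  have : ∏ x ∈ Finset.range r, zeta b ^ (bdigit b k (L + x) * (c / b ^ (L + r - 1 - (L + x)))) = 1 :=
    Finset.prod_eq_one fun a ha => by
      rw [h _ (by omega) (by simpa using ha)]; simp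
  rw [this, mul_one]
  refine Finset.prod_congr rfl fun a ha => ?_
  rw [Finset.mem_range] at ha
  rw [Nat.div_div_eq_div_mul, ← pow_add, show L + r - 1 - a = r + (L - 1 - a) by omega]

/-- Cancellation at the leading digit. -/
lemma norm_sum_one_digit {b : ℕ} (hb : 1 < b) (k L : ℕ) (h1 : bdigit b k L ≠ 0)
    (φ : ℕ → ℝ) (η : ℝ)
    (hφ : ∀ d, d < b ^ L → ∀ e, e < b → |φ (b * d + e) - φ (b * d)| ≤ η) :
    ‖∑ c ∈ Finset.range (b ^ (L + 1)), (φ c : ℂ) * walshCell b k (L + 1) c‖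
      ≤ (b : ℝ) ^ L * (b * η) := by
  rw [pow_succ', sum_range_mul_eq]
  have hd : ∀ d ∈ Finset.range (b ^ L),
      ‖∑ e ∈ Finset.range b, (φ (b * d + e) : ℂ) * walshCell b k (L + 1) (b * d + e)‖ ≤ b * η := by
    intro d hd
    have e1 : ∑ e ∈ Finset.range b, (φ (b * d + e) : ℂ) * walshCell b k (L + 1) (b * d + e)
        = ∑ e ∈ Finset.range b, walshCell b k L d * ((φ (b * d + e) - φ (b * d) : ℝ) : ℂ)
            * zeta b ^ (bdigit b k L * e) := by
      have e2 : ∑ e ∈ Finset.range b, walshCell b k L d * (φ (b * d) : ℂ)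
          * zeta b ^ (bdigit b k L * e) = 0 := by
        rw [← Finset.mul_sum, sum_zeta_eq_zero hb h1 (bdigit_lt (by omega) _ _), mul_zero]
      rw [← sub_zero (∑ e ∈ Finset.range b, (φ (b * d + e) : ℂ) * walshCell b k (L + 1) (b * d + e)),
        ← e2, ← Finset.sum_sub_distrib]
      refine Finset.sum_congr rfl fun e he => ?_
      rw [walshCell_succ _ _ _ (Finset.mem_range.1 he)]
      push_cast
      ring
    rw [e1]
    refine (norm_sum_le_of_le _ (n := fun _ => η) fun e he => ?_).trans (by simp)
    rw [norm_mul, norm_mul, norm_walshCell hb, norm_zeta_pow hb, one_mul, mul_one,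
      Complex.norm_real, Real.norm_eq_abs]
    exact hφ d (Finset.mem_range.1 hd) e (Finset.mem_range.1 he)
  refine (norm_sum_le_of_le _ hd).trans ?_
  simp

/-- Cancellation at the two leading digits: on every block of the second digit, an affine function
contributes nothing. -/
lemma norm_sum_two_digits {b : ℕ} (hb : 1 < b) (k L r : ℕ) (h1 : bdigit b k (L + 1 + r) ≠ 0)
    (h2 : bdigit b k L ≠ 0) (h3 : ∀ a, L + 1 ≤ a → a < L + 1 + r → bdigit b k a = 0)
    (φ : ℕ → ℝ) (τ η : ℕ → ℝ)
    (hφ : ∀ q, q < b ^ L → ∀ i, i < b → ∀ x, x < b ^ r → ∀ e, e < b →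
      |φ (b * (b ^ r * (b * q + i) + x) + e) - φ (b * (b ^ r * (b * q + i) + x)) - τ q * e| ≤ η q) :
    ‖∑ c ∈ Finset.range (b ^ (L + 1 + r + 1)), (φ c : ℂ) * walshCell b k (L + 1 + r + 1) c‖
      ≤ ∑ q ∈ Finset.range (b ^ L), (b : ℝ) * ((b : ℝ) ^ r * (b * η q)) := by
  have hbr : 0 < b ^ r := by positivity
  rw [show b ^ (L + 1 + r + 1) = b * (b ^ r * (b * b ^ L)) by ring, sum_range_mul_eq,
    sum_range_mul_eq, sum_range_mul_eq]
  refine norm_sum_le_of_le _ fun q hq => ?_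
  rw [Finset.mem_range] at hq
  set z1 : ℕ → ℂ := fun e => zeta b ^ (bdigit b k (L + 1 + r) * e) with hz1
  set z2 : ℕ → ℂ := fun e => zeta b ^ (bdigit b k L * e) with hz2
  have hs1 : ∑ e ∈ Finset.range b, z1 e = 0 := sum_zeta_eq_zero hb h1 (bdigit_lt (by omega) _ _)
  have hs2 : ∑ e ∈ Finset.range b, z2 e = 0 := sum_zeta_eq_zero hb h2 (bdigit_lt (by omega) _ _)
  have hw : ∀ i, i < b → ∀ x, x < b ^ r → ∀ e, e < b →
      walshCell b k (L + 1 + r + 1) (b * (b ^ r * (b * q + i) + x) + e)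
        = walshCell b k L q * z2 i * z1 e := by
    intro i hi x hx e he
    rw [walshCell_succ _ _ _ he, walshCell_skip _ _ _ _ h3, Nat.mul_add_div hbr,
      Nat.div_eq_of_lt hx, add_zero, walshCell_succ _ _ _ hi]
  let ψ : ℕ → ℕ → ℕ → ℝ := fun i x e =>
    φ (b * (b ^ r * (b * q + i) + x) + e) - φ (b * (b ^ r * (b * q + i) + x)) - τ q * e
  have e1 : ∑ i ∈ Finset.range b, ∑ x ∈ Finset.range (b ^ r), ∑ e ∈ Finset.range b,
        (φ (b * (b ^ r * (b * q + i) + x) + e) : ℂ)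
          * walshCell b k (L + 1 + r + 1) (b * (b ^ r * (b * q + i) + x) + e)
      = ∑ i ∈ Finset.range b, ∑ x ∈ Finset.range (b ^ r), ∑ e ∈ Finset.range b,
        (ψ i x e : ℂ) * (walshCell b k L q * z2 i * z1 e) := by
    have e2 : ∑ i ∈ Finset.range b, ∑ x ∈ Finset.range (b ^ r), ∑ e ∈ Finset.range b,
        (φ (b * (b ^ r * (b * q + i) + x)) : ℂ) * (walshCell b k L q * z2 i * z1 e) = 0 := by
      refine Finset.sum_eq_zero fun i _ => Finset.sum_eq_zero fun x _ => ?_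
      rw [← Finset.mul_sum, ← Finset.mul_sum, hs1, mul_zero, mul_zero]
    have e3 : ∑ i ∈ Finset.range b, ∑ x ∈ Finset.range (b ^ r), ∑ e ∈ Finset.range b,
        ((τ q : ℂ) * e) * (walshCell b k L q * z2 i * z1 e) = 0 := by
      calc _ = ∑ i ∈ Finset.range b, z2 i * ∑ x ∈ Finset.range (b ^ r), ∑ e ∈ Finset.range b,
            ((τ q : ℂ) * e) * (walshCell b k L q * z1 e) := by
            refine Finset.sum_congr rfl fun i _ => ?_
            simp only [Finset.mul_sum]
            exact Finset.sum_congr rfl fun x _ => Finset.sum_congr rfl fun e _ => by ring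
        _ = 0 := by rw [← Finset.sum_mul, hs2, zero_mul]
    have e4 : ∀ A : ℂ, A = A - 0 - 0 := fun A => by ring
    rw [e4 (∑ i ∈ Finset.range b, ∑ x ∈ Finset.range (b ^ r), ∑ e ∈ Finset.range b,
        (φ (b * (b ^ r * (b * q + i) + x) + e) : ℂ)
          * walshCell b k (L + 1 + r + 1) (b * (b ^ r * (b * q + i) + x) + e))]
    nth_rewrite 1 [← e2]
    rw [← e3]
    simp only [← Finset.sum_sub_distrib]
    refine Finset.sum_congr rfl fun i hi => Finset.sum_congr rfl fun x hx =>
      Finset.sum_congr rfl fun e he => ?_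
    rw [Finset.mem_range] at hi hx he
    rw [hw i hi x hx e he]
    simp only [ψ]
    push_cast
    ring
  rw [e1]
  refine (norm_sum_le_of_le _ (n := fun _ => (b : ℝ) ^ r * (b * η q)) fun i hi =>
    (norm_sum_le_of_le _ (n := fun _ => b * η q) fun x hx =>
      (norm_sum_le_of_le _ (n := fun _ => η q) fun e he => ?_).trans ?_).trans ?_).trans ?_
  · rw [Finset.mem_range] at hi hx he
    rw [norm_mul, norm_mul, norm_mul, norm_walshCell hb, hz1, hz2]
    simp only
    rw [norm_zeta_pow hb, norm_zeta_pow hb, one_mul, mul_one, mul_one,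
      Complex.norm_real, Real.norm_eq_abs]
    exact hφ q hq i hi x hx e he
  all_goals simp

/-! ### Walsh coefficients of functions with two orders of smoothness -/

lemma walsh_eq_cell {b : ℕ} (hb : 1 < b) (k c : ℕ) (x : ℝ)
    (h1 : (c : ℝ) ≤ x * (b : ℝ) ^ lead b k) (h2 : x * (b : ℝ) ^ lead b k < c + 1) :
    walsh b k x = walshCell b k (lead b k) c := by
  have hb0 : (0 : ℝ) < b := by exact_mod_cast (by omega : 0 < b)
  unfold walsh walshCell
  rw [Finset.mul_sum, Complex.exp_sum]
  have hlk : lead b k ≤ k + 1 := by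
    rw [lead_le_iff hb]
    exact (Nat.lt_pow_self hb).trans_le (Nat.pow_le_pow_right (by omega) (by omega))
  have hsub : Finset.range (lead b k) ⊆ Finset.range (k + 1) := Finset.range_mono hlk
  rw [← Finset.prod_subset hsub]
  · refine Finset.prod_congr rfl fun a ha => ?_
    rw [Finset.mem_range] at ha
    have hx0 : 0 ≤ x * (b : ℝ) ^ lead b k := (Nat.cast_nonneg c).trans h1
    have hfl : ⌊x * (b : ℝ) ^ lead b k⌋₊ = c := (Nat.floor_eq_iff hx0).2 ⟨h1, h2⟩
    have hxe : x * (b : ℝ) ^ (a + 1)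
        = x * (b : ℝ) ^ lead b k / ((b ^ (lead b k - 1 - a) : ℕ) : ℝ) := by
      rw [eq_div_iff (by positivity), Nat.cast_pow, mul_assoc, ← pow_add]
      congr 2
      omega
    have hr : rdigit b x (a + 1) = ((c / b ^ (lead b k - 1 - a) % b : ℕ) : ℤ) := by
      unfold rdigit
      rw [hxe, ← Int.natCast_floor_eq_floor (by positivity), Nat.floor_div_natCast, hfl]
      push_cast
      rfl
    rw [hr]
    set n := c / b ^ (lead b k - 1 - a)
    have e1 : zeta b ^ (bdigit b k a * n) = zeta b ^ (bdigit b k a * (n % b)) := by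
      conv_lhs => rw [← Nat.div_add_mod n b]
      rw [Nat.mul_add, pow_add, show bdigit b k a * (b * (n / b)) = b * (bdigit b k a * (n / b)) by
        ring, pow_mul, (zeta_prim hb).pow_eq_one, one_pow, one_mul]
    rw [e1, zeta, ← Complex.exp_nat_mul]
    congr 1
    rw [Int.cast_natCast, Nat.cast_mul]
    ring
  · intro a _ ha
    rw [Finset.mem_range, not_lt] at ha
    rw [bdigit_eq_zero_of_lt hb (lt_pow_lead hb k) ha]
    simp

lemma measurable_walsh (b k : ℕ) : Measurable (walsh b k) := by
  unfold walsh
  refine Complex.measurable_exp.comp (Measurable.const_mul ?_ _)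
  refine Finset.measurable_sum _ fun a _ => Measurable.const_mul ?_ _
  have h1 : Measurable fun x : ℝ => ⌊x * (b : ℝ) ^ (a + 1)⌋ :=
    Int.measurable_floor.comp (measurable_id.mul_const _)
  exact (Measurable.of_discrete (f := fun z : ℤ => ((z % (b : ℤ) : ℤ) : ℂ))).comp h1

lemma norm_walsh (b k : ℕ) (x : ℝ) : ‖walsh b k x‖ = 1 := by
  unfold walsh
  have : 2 * (Real.pi : ℂ) * Complex.I / (b : ℂ) *
    ∑ a ∈ Finset.range (k + 1), (bdigit b k a : ℂ) * (rdigit b x (a + 1) : ℂ)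
    = ((2 * Real.pi / b * ∑ a ∈ Finset.range (k + 1), (bdigit b k a : ℝ) * (rdigit b x (a + 1) : ℝ)
      : ℝ) : ℂ) * Complex.I := by
    push_cast; ring
  rw [this, Complex.norm_exp_ofReal_mul_I]

/-- A quantitative form of bounded variation of the derivative of `f`: on every
equipartition of `[0,1]` the function is, up to Lipschitz constants with bounded sum, affine on the parts. -/
structure TwoSmooth (f : ℝ → ℝ) (M : ℝ) : Prop where
  cont : Continuous f
  bdd : ∀ x ∈ Set.Icc (0 : ℝ) 1, |f x| ≤ M
  lip : ∀ x ∈ Set.Icc (0 : ℝ) 1, ∀ y ∈ Set.Icc (0 : ℝ) 1, |f x - f y| ≤ M * |x - y|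
  block : ∀ N : ℕ, 0 < N → ∃ σ μ : ℕ → ℝ, (∀ i < N, ∀ x ∈ Set.Icc ((i : ℝ) / N) ((i + 1) / N),
    ∀ y ∈ Set.Icc ((i : ℝ) / N) ((i + 1) / N), |f x - f y - σ i * (x - y)| ≤ μ i * |x - y|) ∧
    (∀ i < N, 0 ≤ μ i) ∧ ∑ i ∈ Finset.range N, μ i ≤ M

/-- Splitting a Walsh coefficient into the `b ^ a₁` cells of constancy of the Walsh function. -/
lemma walsh_coeff_cells {b : ℕ} (hb : 1 < b) (k : ℕ) {f : ℝ → ℝ} (hf : Continuous f) (C : ℝ)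
    (hC : ∀ u ∈ Set.Icc (0 : ℝ) (1 / (b : ℝ) ^ lead b k),
      ‖∑ c ∈ Finset.range (b ^ lead b k), (f (c / (b : ℝ) ^ lead b k + u) : ℂ)
        * walshCell b k (lead b k) c‖ ≤ C) :
    ‖∫ x in Set.Ico (0 : ℝ) 1, (f x : ℂ) * walsh b k x‖ ≤ C * (1 / (b : ℝ) ^ lead b k) := by
  have hb0 : (0 : ℝ) < b := by exact_mod_cast (by omega : 0 < b)
  set L := lead b k with hL
  have hB : (0 : ℝ) < (b : ℝ) ^ L := by positivity
  have hint : ∀ x y : ℝ, IntervalIntegrable (fun x => (f x : ℂ) * walsh b k x) volume x y := by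
    intro x y
    have h1 : IntervalIntegrable (fun x => (f x : ℂ)) volume x y :=
      (Complex.continuous_ofReal.comp hf).intervalIntegrable _ _
    refine h1.mono_fun ((Complex.measurable_ofReal.comp hf.measurable).mul
      (measurable_walsh b k)).aestronglyMeasurable ?_
    filter_upwards with x
    rw [norm_mul, norm_walsh, mul_one]
  rw [integral_Ico_eq_integral_Ioc, ← intervalIntegral.integral_of_le zero_le_one]
  have hsplit := intervalIntegral.sum_integral_adjacent_intervals (μ := volume)
    (f := fun x => (f x : ℂ) * walsh b k x) (a := fun c : ℕ => (c : ℝ) / (b : ℝ) ^ L) (n := b ^ L)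
    (fun c _ => hint _ _)
  have e0 : ((b ^ L : ℕ) : ℝ) / (b : ℝ) ^ L = 1 := by
    push_cast; exact div_self hB.ne'
  simp only [e0, Nat.cast_zero, zero_div] at hsplit
  rw [← hsplit]
  have hcell : ∀ c ∈ Finset.range (b ^ L),
      ∫ x in ((c : ℝ) / (b : ℝ) ^ L)..(((c + 1 : ℕ) : ℝ) / (b : ℝ) ^ L), (f x : ℂ) * walsh b k x
      = ∫ u in (0 : ℝ)..(1 / (b : ℝ) ^ L), (f (c / (b : ℝ) ^ L + u) : ℂ) * walshCell b k L c := by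
    intro c _
    have hle : (c : ℝ) / (b : ℝ) ^ L ≤ ((c + 1 : ℕ) : ℝ) / (b : ℝ) ^ L := by
      gcongr; simp
    have e1 : ∫ x in ((c : ℝ) / (b : ℝ) ^ L)..(((c + 1 : ℕ) : ℝ) / (b : ℝ) ^ L),
        (f x : ℂ) * walsh b k x
        = ∫ x in ((c : ℝ) / (b : ℝ) ^ L)..(((c + 1 : ℕ) : ℝ) / (b : ℝ) ^ L),
        (f x : ℂ) * walshCell b k L c := by
      rw [intervalIntegral.integral_of_le hle, intervalIntegral.integral_of_le hle,
        ← integral_Ico_eq_integral_Ioc, ← integral_Ico_eq_integral_Ioc]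
      refine setIntegral_congr_fun measurableSet_Ico fun x hx => ?_
      have h1 := (div_le_iff₀ hB).1 hx.1
      have h2 := (lt_div_iff₀ hB).1 hx.2
      push_cast at h2
      rw [walsh_eq_cell hb k c x h1 h2]
    rw [e1]
    have e2 := intervalIntegral.integral_comp_add_left (a := 0) (b := 1 / (b : ℝ) ^ L)
      (fun x => (f x : ℂ) * walshCell b k L c) ((c : ℝ) / (b : ℝ) ^ L)
    rw [e2]
    congr 1
    · ring
    · push_cast; ring
  rw [Finset.sum_congr rfl hcell, ← intervalIntegral.integral_finsetSum]
  · refine (intervalIntegral.norm_integral_le_of_norm_le_const (C := C) fun u hu => ?_).trans ?_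
    · rw [Set.uIoc_of_le (by positivity)] at hu
      exact hC u ⟨hu.1.le, hu.2⟩
    · rw [sub_zero, abs_of_pos (by positivity)]
  · intro c _
    exact ((Complex.continuous_ofReal.comp (hf.comp (continuous_const.add continuous_id))).mul
      continuous_const).intervalIntegrable _ _

/-- Decay of Walsh coefficients: `|f̂(k)| ≤ C b^{-(a₁ + a₂)}`. -/
lemma TwoSmooth.walsh_coeff_le {b : ℕ} (hb : 1 < b) (k : ℕ) {f : ℝ → ℝ} {M : ℝ}
    (hf : TwoSmooth f M) :
    ‖∫ x in Set.Ico (0 : ℝ) 1, (f x : ℂ) * walsh b k x‖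
      ≤ (b : ℝ) ^ 2 * M * ((b : ℝ)⁻¹) ^ (lead b k + lead₂ b k) := by
  have hb0 : (0 : ℝ) < b := by exact_mod_cast (by omega : 0 < b)
  have hb1 : (1 : ℝ) ≤ b := by exact_mod_cast hb.le
  have hM : 0 ≤ M := (abs_nonneg _).trans (hf.bdd 0 ⟨le_rfl, zero_le_one⟩)
  have hB : (0 : ℝ) < (b : ℝ) ^ lead b k := by positivity
  suffices h : ∀ u ∈ Set.Icc (0 : ℝ) (1 / (b : ℝ) ^ lead b k),
      ‖∑ c ∈ Finset.range (b ^ lead b k), (f (c / (b : ℝ) ^ lead b k + u) : ℂ)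
        * walshCell b k (lead b k) c‖ ≤ (b : ℝ) ^ 2 * M * ((b : ℝ)⁻¹) ^ lead₂ b k by
    refine (walsh_coeff_cells hb k hf.cont _ h).trans (le_of_eq ?_)
    rw [pow_add, inv_pow, inv_pow]
    ring
  intro u hu
  have hu0 := hu.1
  have hmem : ∀ c : ℕ, c < b ^ lead b k →
      (c : ℝ) / (b : ℝ) ^ lead b k + u ∈ Set.Icc (0 : ℝ) 1 := by
    intro c hc
    refine ⟨by positivity, ?_⟩
    have h1 : ((c + 1 : ℕ) : ℝ) ≤ ((b ^ lead b k : ℕ) : ℝ) := by exact_mod_cast hc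
    push_cast at h1
    have h2 : (c : ℝ) / (b : ℝ) ^ lead b k + 1 / (b : ℝ) ^ lead b k ≤ 1 := by
      rw [← add_div, div_le_one hB]; exact h1
    linarith [hu.2]
  rcases Nat.eq_zero_or_pos (lead b k) with h0 | hpos
  · have h02 : lead₂ b k = 0 := by have := lead₂_le hb k; omega
    rw [h02]
    have h1 := hf.bdd _ (hmem 0 (by positivity))
    rw [h0] at h1 ⊢
    simp only [pow_zero, Finset.range_one, Finset.sum_singleton, mul_one]
    rw [norm_mul, norm_walshCell hb, Complex.norm_real, Real.norm_eq_abs, mul_one]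
    simp only [pow_zero] at h1
    refine h1.trans ?_
    nlinarith [one_le_pow₀ hb1 (n := 2)]
  have hlast := bdigit_lead_ne hb hpos
  rcases Nat.eq_zero_or_pos (lead₂ b k) with h2 | hpos2
  · rw [h2]
    obtain ⟨L, hL⟩ : ∃ L, lead b k = L + 1 := ⟨lead b k - 1, by omega⟩
    rw [hL] at hlast hmem hB hu ⊢
    have := norm_sum_one_digit hb k L (by simpa using hlast)
      (fun c => f (c / (b : ℝ) ^ (L + 1) + u)) (M * (b / (b : ℝ) ^ (L + 1))) ?_
    · refine this.trans ?_
      rw [pow_zero, mul_one, pow_succ (b : ℝ) L]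
      have e : (b : ℝ) ^ L * (b * (M * (b / ((b : ℝ) ^ L * b)))) = b * M := by field_simp
      rw [e]
      gcongr
      nlinarith
    · intro d hd e he
      have hlt : b * d + e < b ^ (L + 1) := by
        have : b * (d + 1) ≤ b * b ^ L := Nat.mul_le_mul_left b hd
        rw [pow_succ', ]
        rw [Nat.mul_succ] at this
        omega
      refine (hf.lip _ (hmem _ hlt) _ (hmem _ (by omega))).trans ?_
      refine mul_le_mul_of_nonneg_left ?_ hM
      have e1 : (((b * d + e : ℕ) : ℝ) / (b : ℝ) ^ (L + 1) + u)
          - (((b * d : ℕ) : ℝ) / (b : ℝ) ^ (L + 1) + u) = e / (b : ℝ) ^ (L + 1) := by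
        push_cast; ring
      rw [e1, abs_of_nonneg (by positivity)]
      gcongr
  · have h21 := lead₂_le hb k
    obtain ⟨L, hL⟩ : ∃ L, lead₂ b k = L + 1 := ⟨lead₂ b k - 1, by omega⟩
    obtain ⟨r, hr⟩ : ∃ r, lead b k = L + 1 + r + 1 := ⟨lead b k - 1 - lead₂ b k, by omega⟩
    have hsec := bdigit_lead₂_ne hb hpos2
    have hzero : ∀ a, L + 1 ≤ a → a < L + 1 + r → bdigit b k a = 0 := fun a ha1 ha2 =>
      bdigit_eq_zero hb (by omega) (by omega)
    rw [hL] at hsec ⊢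
    rw [hr] at hlast hmem hB hu ⊢
    obtain ⟨σ, μ, hblock, hμ0, hμ⟩ := hf.block (b ^ L) (by positivity)
    set B := (b : ℝ) ^ (L + 1 + r + 1) with hBdef
    have := norm_sum_two_digits hb k L r (by simpa using hlast) (by simpa using hsec) hzero
      (fun c => f (c / B + u)) (fun q => σ q / B) (fun q => μ q * (b / B)) ?_
    · refine this.trans ?_
      have e : ∀ q, (b : ℝ) * ((b : ℝ) ^ r * (b * (μ q * (b / B))))
          = (b : ℝ) ^ 2 * ((b : ℝ)⁻¹) ^ (L + 1) * μ q := by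
        intro q
        rw [hBdef, inv_pow]
        field_simp
        ring
      rw [Finset.sum_congr rfl fun q _ => e q, ← Finset.mul_sum]
      calc _ ≤ (b : ℝ) ^ 2 * ((b : ℝ)⁻¹) ^ (L + 1) * M := by gcongr
        _ = _ := by ring
    · intro q hq i hi x hx e he
      set d := b ^ r * (b * q + i) + x with hd
      have hdlo : b ^ r * b * q ≤ d := by
        rw [hd, Nat.mul_add]; nlinarith [Nat.zero_le (b ^ r * i)]
      have hdhi : d + 1 ≤ b ^ r * b * (q + 1) := by
        have h1 : b ^ r * (i + 1) ≤ b ^ r * b := Nat.mul_le_mul_left _ hi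
        rw [hd]
        nlinarith
      have hin : ∀ e' : ℕ, e' < b → ((b * d + e' : ℕ) : ℝ) / B + u ∈
          Set.Icc ((q : ℝ) / ((b ^ L : ℕ) : ℝ)) (((q : ℝ) + 1) / ((b ^ L : ℕ) : ℝ)) := by
        intro e' he'
        have hBe : B = (b : ℝ) ^ L * ((b : ℝ) ^ r * b * b) := by rw [hBdef]; ring
        have hbL : (0 : ℝ) < (b : ℝ) ^ L := by positivity
        have hbr : (0 : ℝ) < (b : ℝ) ^ r * b * b := by positivity
        have lo : (b : ℝ) ^ r * b * b * q ≤ ((b * d + e' : ℕ) : ℝ) := by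
          have : b ^ r * b * b * q ≤ b * d + e' := by nlinarith
          exact_mod_cast this
        have hi' : ((b * d + e' : ℕ) : ℝ) + 1 ≤ (b : ℝ) ^ r * b * b * (q + 1) := by
          have : b * d + e' + 1 ≤ b ^ r * b * b * (q + 1) := by nlinarith
          exact_mod_cast this
        constructor
        · push_cast only [Nat.cast_pow]
          have : (q : ℝ) / (b : ℝ) ^ L = ((b : ℝ) ^ r * b * b * q) / B := by
            rw [hBe]; field_simp
          rw [this]
          have := div_le_div_of_nonneg_right lo hB.le
          linarith
        · push_cast only [Nat.cast_pow]
          have : ((q : ℝ) + 1) / (b : ℝ) ^ L = ((b : ℝ) ^ r * b * b * (q + 1)) / B := by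
            rw [hBe]; field_simp
          rw [this]
          have h1 := div_le_div_of_nonneg_right hi' hB.le
          rw [add_div] at h1
          linarith [hu.2]
      have e1 : (((b * d + e : ℕ) : ℝ) / B + u) - (((b * d : ℕ) : ℝ) / B + u) = e / B := by
        push_cast; ring
      have hb2 := hblock q hq _ (hin e he) _ (hin 0 (by omega))
      rw [add_zero, e1, abs_of_nonneg (by positivity : (0 : ℝ) ≤ (e : ℝ) / B)] at hb2
      have e2 : σ q / B * e = σ q * (e / B) := by ring
      rw [e2]
      refine hb2.trans (mul_le_mul_of_nonneg_left ?_ (hμ0 q hq))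
      gcongr

/-! ### Monomials and hinge functions -/

lemma twoSmooth_pow (p : ℕ) : TwoSmooth (fun x => x ^ p) (p + 1) where
  cont := by fun_prop
  bdd x hx := by
    have hp : (0 : ℝ) ≤ p := p.cast_nonneg
    rw [abs_of_nonneg (pow_nonneg hx.1 _)]
    linarith [pow_le_one₀ hx.1 hx.2 (n := p)]
  lip x hx y hy := by
    have hp : (0 : ℝ) ≤ p := p.cast_nonneg
    rw [← geom_sum₂_mul, abs_mul]
    gcongr
    have h0 : ∀ i ∈ Finset.range p, 0 ≤ x ^ i * y ^ (p - 1 - i) := fun i _ =>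
      mul_nonneg (pow_nonneg hx.1 _) (pow_nonneg hy.1 _)
    rw [abs_of_nonneg (Finset.sum_nonneg h0)]
    have h1 : ∀ i ∈ Finset.range p, x ^ i * y ^ (p - 1 - i) ≤ 1 := fun i _ =>
      mul_le_one₀ (pow_le_one₀ hx.1 hx.2) (pow_nonneg hy.1 _) (pow_le_one₀ hy.1 hy.2)
    have := Finset.sum_le_sum h1
    simp only [Finset.sum_const, Finset.card_range, nsmul_eq_mul, mul_one] at this
    linarith
  block N hN := by
    have hN' : (0 : ℝ) < N := by exact_mod_cast hN
    -- On a block, the difference quotient lies between the derivatives at its endpoints, and the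
    -- increments of the derivative telescope.
    refine ⟨fun i => p * ((i : ℝ) / N) ^ (p - 1),
      fun i => p * (((i : ℝ) + 1) / N) ^ (p - 1) - p * ((i : ℝ) / N) ^ (p - 1), ?_, ?_, ?_⟩
    · intro i _ x hx y hy
      have hξ : 0 ≤ (i : ℝ) / N := by positivity
      have hx0 := hξ.trans hx.1
      have hy0 := hξ.trans hy.1
      rw [← geom_sum₂_mul, ← sub_mul, abs_mul]
      gcongr
      have key : ∀ j ∈ Finset.range p, ((i : ℝ) / N) ^ (p - 1) ≤ x ^ j * y ^ (p - 1 - j) ∧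
          x ^ j * y ^ (p - 1 - j) ≤ (((i : ℝ) + 1) / N) ^ (p - 1) := by
        intro j hj
        rw [Finset.mem_range] at hj
        have e : ∀ z : ℝ, z ^ (p - 1) = z ^ j * z ^ (p - 1 - j) := fun z => by
          rw [← pow_add]; congr 1; omega
        rw [e, e]
        exact ⟨mul_le_mul (pow_le_pow_left₀ hξ hx.1 _) (pow_le_pow_left₀ hξ hy.1 _)
          (by positivity) (by positivity),
          mul_le_mul (pow_le_pow_left₀ hx0 hx.2 _) (pow_le_pow_left₀ hy0 hy.2 _)
          (by positivity) (by positivity)⟩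
      have h1 := Finset.sum_le_sum fun j hj => (key j hj).1
      have h2 := Finset.sum_le_sum fun j hj => (key j hj).2
      simp only [Finset.sum_const, Finset.card_range, nsmul_eq_mul] at h1 h2
      rw [abs_of_nonneg (by linarith)]
      linarith
    · intro i _
      have : ((i : ℝ) / N) ^ (p - 1) ≤ (((i : ℝ) + 1) / N) ^ (p - 1) := by
        gcongr; linarith
      have := mul_le_mul_of_nonneg_left this (Nat.cast_nonneg (α := ℝ) p)
      linarith
    · have h := Finset.sum_range_sub (fun i : ℕ => (p : ℝ) * ((i : ℝ) / N) ^ (p - 1)) N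
      simp only [Nat.cast_add, Nat.cast_one] at h
      rw [h, div_self hN'.ne', one_pow]
      have : 0 ≤ (p : ℝ) * (((0 : ℕ) : ℝ) / N) ^ (p - 1) := by positivity
      linarith

lemma abs_hinge_sub_le (t x y : ℝ) : |max (x - t) 0 - max (y - t) 0| ≤ |x - y| := by
  have := abs_max_sub_max_le_abs (x - t) (y - t) 0
  simpa using this

lemma twoSmooth_hinge {t : ℝ} (ht : t ∈ Set.Icc (0 : ℝ) 1) :
    TwoSmooth (fun x => max (x - t) 0) 1 where
  cont := by fun_prop
  bdd x hx := by
    rw [abs_of_nonneg (le_max_right _ _)]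
    exact max_le (by linarith [hx.2, ht.1]) zero_le_one
  lip x _ y _ := by
    rw [one_mul]
    exact abs_hinge_sub_le t x y
  block N hN := by
    have hN' : (0 : ℝ) < N := by exact_mod_cast hN
    -- The hinge is affine on every block except the one that contains the kink `t`.
    refine ⟨fun i => if i ≤ ⌊t * N⌋₊ then 0 else 1, fun i => if i = ⌊t * N⌋₊ then 1 else 0,
      ?_, ?_, ?_⟩
    · intro i _ x hx y hy
      have htN : 0 ≤ t * N := mul_nonneg ht.1 hN'.le
      rcases lt_trichotomy i ⌊t * N⌋₊ with h | h | h
      · have h1 : ((i : ℝ) + 1) / N ≤ t := by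
          rw [div_le_iff₀ hN']
          have : ((i + 1 : ℕ) : ℝ) ≤ t * N := (Nat.le_floor_iff htN).1 h
          exact_mod_cast this
        simp only [h.le, if_true, h.ne, if_false]
        rw [max_eq_right (by linarith [hx.2]), max_eq_right (by linarith [hy.2])]
        simp
      · simp only [h, le_refl, if_true, zero_mul, sub_zero, one_mul]
        exact abs_hinge_sub_le t x y
      · have h1 : t ≤ (i : ℝ) / N := by
          rw [le_div_iff₀ hN']
          exact ((Nat.floor_lt htN).1 h).le
        simp only [not_le.2 h, if_false, h.ne']
        rw [max_eq_left (by linarith [hx.1]), max_eq_left (by linarith [hy.1])]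
        simp
    · intro i _
      positivity
    · rw [Finset.sum_ite_eq']
      split_ifs <;> norm_num

/-! ### The kernel as polynomial part plus an integral of products of hinges -/

/-- The non-polynomial part of `K₂`, equal to `∫₀¹ (x-t)₊ (y-t)₊ dt` on the unit square. -/
noncomputable def Jker (x y : ℝ) : ℝ :=
  (|x - y| ^ 3 - (x ^ 3 + y ^ 3 - 3 * x * y ^ 2 - 3 * x ^ 2 * y)) / 12

/-- The coefficients of the polynomial part of `K₂`. -/
noncomputable def Kcoef : Fin 5 → Fin 5 → ℝ :=
  ![![151/120, -13/24, 0, 1/12, -1/24],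
    ![-13/24, 4/3, -1/2, 1/6, 0],
    ![0, -1/2, 0, 0, 0],
    ![1/12, 1/6, 0, 0, 0],
    ![-1/24, 0, 0, 0, 0]]

lemma bernoulliPoly_zero (x : ℝ) : bernoulliPoly 0 x = 1 := by
  simp [bernoulliPoly]

lemma bernoulliPoly_one (x : ℝ) : bernoulliPoly 1 x = x - 1 / 2 := by
  simp [bernoulliPoly, Polynomial.bernoulli, Finset.sum_range_succ, Polynomial.aeval_monomial]
  ring

lemma bernoulliPoly_two (x : ℝ) : bernoulliPoly 2 x = x ^ 2 - x + 1 / 6 := by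
  simp [bernoulliPoly, Polynomial.bernoulli, Finset.sum_range_succ, Polynomial.aeval_monomial,
    bernoulli_two]
  ring

lemma bernoulliPoly_four (x : ℝ) : bernoulliPoly 4 x = x ^ 4 - 2 * x ^ 3 + x ^ 2 - 1 / 30 := by
  have h3 : bernoulli 3 = 0 := by
    rw [bernoulli_eq_bernoulli'_of_ne_one (by norm_num), bernoulli'_three]
  have h4 : bernoulli 4 = -1 / 30 := by
    rw [bernoulli_eq_bernoulli'_of_ne_one (by norm_num), bernoulli'_four]
  simp [bernoulliPoly, Polynomial.bernoulli, Finset.sum_range_succ, Polynomial.aeval_monomial,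
    bernoulli_two, h3, h4, Nat.choose]
  ring

lemma Kker_two_eq (x y : ℝ) :
    Kker 2 x y
      = (∑ p : Fin 5, ∑ q : Fin 5, Kcoef p q * (x ^ (p : ℕ) * y ^ (q : ℕ))) + Jker x y := by
  have h4 : |x - y| ^ 4 = (x - y) ^ 4 := by rw [← abs_pow, abs_of_nonneg (by positivity)]
  simp only [Kker, Finset.sum_range_succ, Finset.sum_range_zero, bernoulliPoly_zero,
    bernoulliPoly_one, bernoulliPoly_two, show 2 * 2 = 4 from rfl, bernoulliPoly_four, sq_abs, h4,
    Jker]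
  simp [Fin.sum_univ_five, Kcoef, Nat.factorial]
  ring

lemma Jker_eq_integral {x y : ℝ} (hx : x ∈ Set.Ico (0 : ℝ) 1) (hy : y ∈ Set.Ico (0 : ℝ) 1) :
    Jker x y = ∫ t in Set.Ico (0 : ℝ) 1, max (x - t) 0 * max (y - t) 0 := by
  wlog hxy : x ≤ y generalizing x y
  · rw [show Jker x y = Jker y x by unfold Jker; rw [abs_sub_comm]; ring, this hy hx (by linarith)]
    simp only [mul_comm]
  rw [integral_Ico_eq_integral_Ioc, ← intervalIntegral.integral_of_le zero_le_one]
  have hcont : Continuous fun t : ℝ => max (x - t) 0 * max (y - t) 0 := by fun_prop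
  rw [← intervalIntegral.integral_add_adjacent_intervals (b := x) (hcont.intervalIntegrable _ _)
    (hcont.intervalIntegrable _ _)]
  have e1 : ∫ t in (0 : ℝ)..x, max (x - t) 0 * max (y - t) 0
      = ∫ t in (0 : ℝ)..x, (x * y - (x + y) * t + t ^ 2) := by
    refine intervalIntegral.integral_congr fun t ht => ?_
    rw [Set.uIcc_of_le hx.1] at ht
    rw [max_eq_left (by linarith [ht.2]), max_eq_left (by linarith [ht.2])]
    ring
  have e2 : ∫ t in x..1, max (x - t) 0 * max (y - t) 0 = ∫ t in x..1, (0 : ℝ) := by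
    refine intervalIntegral.integral_congr fun t ht => ?_
    rw [Set.uIcc_of_le hx.2.le] at ht
    rw [max_eq_right (by linarith [ht.1]), zero_mul]
  rw [e1, e2, intervalIntegral.integral_zero, add_zero, intervalIntegral.integral_add,
    intervalIntegral.integral_sub]
  · have e3 : ∫ t in (0 : ℝ)..x, (x + y) * t = (x + y) * ((x ^ 2 - 0 ^ 2) / 2) := by
      rw [intervalIntegral.integral_const_mul, _root_.integral_id]
    rw [e3]
    simp only [intervalIntegral.integral_const, integral_pow, smul_eq_mul]
    unfold Jker
    rw [abs_of_nonpos (by linarith)]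
    push_cast
    ring
  all_goals exact Continuous.intervalIntegrable (by fun_prop) _ _

/-! ### Decay of the Walsh coefficients of the kernel -/

lemma integrableOn_mul_of_continuous {X : Type*} [TopologicalSpace X] [MeasurableSpace X]
    [OpensMeasurableSpace X] {μ : Measure X} [IsFiniteMeasureOnCompacts μ] {S K : Set X}
    (hK : IsCompact K) (hSK : S ⊆ K) (hKm : MeasurableSet K) {F : X → ℝ} (hF : Continuous F)
    {w : X → ℂ} (hw : Measurable w) (hw1 : ∀ x, ‖w x‖ ≤ 1) :
    Integrable (fun x => (F x : ℂ) * w x) (μ.restrict S) := by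
  have h1 : IntegrableOn (fun x => (F x : ℂ)) S μ :=
    Integrable.ofReal ((hF.continuousOn.integrableOn_compact' hK hKm).mono_set hSK)
  exact h1.mul_bdd (c := 1) hw.aestronglyMeasurable (Filter.Eventually.of_forall hw1)

lemma walsh_coeff_conj_le {b : ℕ} (hb : 1 < b) (k : ℕ) {f : ℝ → ℝ} {M : ℝ} (hf : TwoSmooth f M) :
    ‖∫ x in Set.Ico (0 : ℝ) 1, (f x : ℂ) * (starRingEnd ℂ) (walsh b k x)‖
      ≤ (b : ℝ) ^ 2 * M * ((b : ℝ)⁻¹) ^ (lead b k + lead₂ b k) := by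
  have h : ∀ x, (f x : ℂ) * (starRingEnd ℂ) (walsh b k x)
      = (starRingEnd ℂ) ((f x : ℂ) * walsh b k x) := fun x => by
    rw [map_mul, Complex.conj_ofReal]
  simp only [h]
  rw [integral_conj, RCLike.norm_conj]
  exact hf.walsh_coeff_le hb k

/-- Decay of the Walsh coefficients of `K₂`: the polynomial part and, after exchanging the order of
integration, the hinge part both reduce to products of one-variable Walsh coefficients. -/
lemma exists_Khat_bound {b : ℕ} (hb : 1 < b) : ∃ C : ℝ, 0 ≤ C ∧ ∀ k l, ‖Khat b 2 k l‖ ≤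
    C * (((b : ℝ)⁻¹) ^ (lead b k + lead₂ b k) * ((b : ℝ)⁻¹) ^ (lead b l + lead₂ b l)) := by
  refine ⟨(∑ p : Fin 5, ∑ q : Fin 5, |Kcoef p q| * ((b : ℝ) ^ 2 * ((p : ℕ) + 1)
    * ((b : ℝ) ^ 2 * ((q : ℕ) + 1)))) + (b : ℝ) ^ 2 * 1 * ((b : ℝ) ^ 2 * 1), by positivity,
    fun k l => ?_⟩
  set rk := ((b : ℝ)⁻¹) ^ (lead b k + lead₂ b k) with hrk
  set rl := ((b : ℝ)⁻¹) ^ (lead b l + lead₂ b l) with hrl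
  have hrk0 : 0 ≤ rk := by positivity
  have hrl0 : 0 ≤ rl := by positivity
  set A : ℝ → ℂ := fun x => (starRingEnd ℂ) (walsh b k x) with hA
  set B : ℝ → ℂ := fun y => walsh b l y with hB
  have hAm : Measurable A := Complex.continuous_conj.measurable.comp (measurable_walsh b k)
  have hBm : Measurable B := measurable_walsh b l
  have hA1 : ∀ x, ‖A x‖ = 1 := fun x => by rw [hA, RCLike.norm_conj, norm_walsh]
  have hB1 : ∀ x, ‖B x‖ = 1 := fun x => norm_walsh b l x
  set S := Set.Ico (0 : ℝ) 1 with hS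
  set μ : Measure ℝ := volume.restrict S with hμ
  have hSI : S ⊆ Set.Icc 0 1 := Set.Ico_subset_Icc_self
  have hμ2 : μ.prod μ = (volume.prod volume).restrict (S ×ˢ S) := Measure.prod_restrict S S
  have hw : Measurable fun z : ℝ × ℝ => A z.1 * B z.2 :=
    (hAm.comp measurable_fst).mul (hBm.comp measurable_snd)
  have hw1 : ∀ z : ℝ × ℝ, ‖A z.1 * B z.2‖ ≤ 1 := fun z => by rw [norm_mul, hA1, hB1, mul_one]
  have hI : ∀ F : ℝ × ℝ → ℝ, Continuous F →
      Integrable (fun z : ℝ × ℝ => (F z : ℂ) * (A z.1 * B z.2)) (μ.prod μ) := by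
    intro F hF
    rw [hμ2]
    exact integrableOn_mul_of_continuous (isCompact_Icc.prod isCompact_Icc)
      (Set.prod_mono hSI hSI) (measurableSet_Icc.prod measurableSet_Icc) hF hw hw1
  have hsep : ∀ {f h : ℝ → ℝ} {M M' : ℝ}, TwoSmooth f M → TwoSmooth h M' →
      ‖∫ z : ℝ × ℝ, ((f z.1 * h z.2 : ℝ) : ℂ) * (A z.1 * B z.2) ∂(μ.prod μ)‖
        ≤ (b : ℝ) ^ 2 * M * ((b : ℝ) ^ 2 * M') * (rk * rl) := by
    intro f h M M' hf hh
    have e : ∀ z : ℝ × ℝ, ((f z.1 * h z.2 : ℝ) : ℂ) * (A z.1 * B z.2)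
        = ((f z.1 : ℂ) * A z.1) * ((h z.2 : ℂ) * B z.2) := fun z => by push_cast; ring
    simp only [e]
    rw [integral_prod_mul (fun x : ℝ => (f x : ℂ) * A x) (fun y : ℝ => (h y : ℂ) * B y), norm_mul]
    have h1 := walsh_coeff_conj_le hb k hf
    have h2 := hh.walsh_coeff_le hb l
    calc _ ≤ ((b : ℝ) ^ 2 * M * rk) * ((b : ℝ) ^ 2 * M' * rl) :=
          mul_le_mul h1 h2 (norm_nonneg _) ((norm_nonneg _).trans h1)
      _ = _ := by ring
  have hJc : Continuous fun z : ℝ × ℝ => Jker z.1 z.2 := by unfold Jker; fun_prop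
  have hK : Khat b 2 k l = ∫ z : ℝ × ℝ, (Kker 2 z.1 z.2 : ℂ) * (A z.1 * B z.2) ∂(μ.prod μ) := by
    rw [integral_prod]
    · simp only [Khat, hA, hB, mul_assoc]
      rfl
    · refine hI (fun z => Kker 2 z.1 z.2) ?_
      simp only [Kker_two_eq]
      exact Continuous.add (by fun_prop) hJc
  have hsplit : ∀ z : ℝ × ℝ, (Kker 2 z.1 z.2 : ℂ) * (A z.1 * B z.2)
      = (∑ p : Fin 5, ∑ q : Fin 5, (Kcoef p q : ℂ) *
          (((z.1 ^ (p : ℕ) * z.2 ^ (q : ℕ) : ℝ) : ℂ) * (A z.1 * B z.2)))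
        + (Jker z.1 z.2 : ℂ) * (A z.1 * B z.2) := by
    intro z
    rw [Kker_two_eq, Complex.ofReal_add, add_mul, Complex.ofReal_sum, Finset.sum_mul]
    congr 1
    refine Finset.sum_congr rfl fun p _ => ?_
    rw [Complex.ofReal_sum, Finset.sum_mul]
    refine Finset.sum_congr rfl fun q _ => ?_
    rw [Complex.ofReal_mul, mul_assoc]
  have hIpq : ∀ p q : Fin 5, Integrable (fun z : ℝ × ℝ => (Kcoef p q : ℂ) *
      (((z.1 ^ (p : ℕ) * z.2 ^ (q : ℕ) : ℝ) : ℂ) * (A z.1 * B z.2))) (μ.prod μ) := fun p q =>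
    (hI (fun z => z.1 ^ (p : ℕ) * z.2 ^ (q : ℕ)) (by fun_prop)).const_mul _
  have hJ : ‖∫ z : ℝ × ℝ, (Jker z.1 z.2 : ℂ) * (A z.1 * B z.2) ∂(μ.prod μ)‖
      ≤ (b : ℝ) ^ 2 * 1 * ((b : ℝ) ^ 2 * 1) * (rk * rl) := by
    have e1 : ∫ z : ℝ × ℝ, (Jker z.1 z.2 : ℂ) * (A z.1 * B z.2) ∂(μ.prod μ)
        = ∫ z : ℝ × ℝ, (∫ t, ((max (z.1 - t) 0 * max (z.2 - t) 0 : ℝ) : ℂ) * (A z.1 * B z.2) ∂μ)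
          ∂(μ.prod μ) := by
      rw [hμ2]
      refine setIntegral_congr_fun (measurableSet_Ico.prod measurableSet_Ico) fun z hz => ?_
      rw [integral_mul_const, integral_complex_ofReal, Jker_eq_integral hz.1 hz.2]
    rw [e1, integral_integral_swap]
    · have hb2 : ∀ t ∈ S, ‖∫ z : ℝ × ℝ, ((max (z.1 - t) 0 * max (z.2 - t) 0 : ℝ) : ℂ)
          * (A z.1 * B z.2) ∂(μ.prod μ)‖ ≤ (b : ℝ) ^ 2 * 1 * ((b : ℝ) ^ 2 * 1) * (rk * rl) :=
        fun t ht => hsep (twoSmooth_hinge (hSI ht)) (twoSmooth_hinge (hSI ht))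
      have := norm_setIntegral_le_of_norm_le_const (μ := volume) (s := S) (by simp [hS]) hb2
      simpa [hS] using this
    · rw [hμ2, hμ, Measure.prod_restrict]
      exact integrableOn_mul_of_continuous
        (F := fun v : (ℝ × ℝ) × ℝ => max (v.1.1 - v.2) 0 * max (v.1.2 - v.2) 0)
        (w := fun v : (ℝ × ℝ) × ℝ => A v.1.1 * B v.1.2)
        ((isCompact_Icc.prod isCompact_Icc).prod isCompact_Icc)
        (Set.prod_mono (Set.prod_mono hSI hSI) hSI)
        ((measurableSet_Icc.prod measurableSet_Icc).prod measurableSet_Icc) (by fun_prop)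
        (hw.comp measurable_fst) (fun v => hw1 v.1)
  rw [hK]
  simp only [hsplit]
  rw [integral_add (integrable_finsetSum _ fun p _ => integrable_finsetSum _ fun q _ => hIpq p q)
    (hI _ hJc), integral_finsetSum _ fun p _ => integrable_finsetSum _ fun q _ => hIpq p q]
  refine (norm_add_le _ _).trans ?_
  rw [add_mul]
  refine add_le_add ((norm_sum_le _ _).trans ?_) hJ
  rw [Finset.sum_mul]
  refine Finset.sum_le_sum fun p _ => ?_
  rw [integral_finsetSum _ fun q _ => hIpq p q, Finset.sum_mul]
  refine (norm_sum_le _ _).trans (Finset.sum_le_sum fun q _ => ?_)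
  rw [integral_const_mul, norm_mul, Complex.norm_real, Real.norm_eq_abs, mul_assoc]
  exact mul_le_mul_of_nonneg_left (hsep (twoSmooth_pow p) (twoSmooth_pow q)) (abs_nonneg _)

lemma KhatS_eq_prod (b α s : ℕ) (k l : Fin s → ℕ) :
    KhatS b α s k l = ∏ j, Khat b α (k j) (l j) := by
  have hμ : (volume : Measure (Fin s → ℝ)).restrict (Set.univ.pi fun _ => Set.Ico (0 : ℝ) 1)
      = Measure.pi fun _ => (volume : Measure ℝ).restrict (Set.Ico (0 : ℝ) 1) := by
    rw [volume_pi, Measure.restrict_pi_pi]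
  unfold KhatS Khat walshVec
  rw [hμ, ← integral_fintype_prod_eq_prod (fun j x => ∫ y in Set.Ico (0 : ℝ) 1,
    (Kker α x y : ℂ) * (starRingEnd ℂ) (walsh b (k j) x) * walsh b (l j) y)]
  refine integral_congr_ae (Filter.Eventually.of_forall fun x => ?_)
  dsimp only
  rw [← integral_fintype_prod_eq_prod (fun j y =>
    (Kker α (x j) y : ℂ) * (starRingEnd ℂ) (walsh b (k j) (x j)) * walsh b (l j) y)]
  refine integral_congr_ae (Filter.Eventually.of_forall fun y => ?_)
  dsimp only
  rw [Finset.prod_mul_distrib, Finset.prod_mul_distrib, Complex.ofReal_prod, map_prod]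

/-! ### Assembling the estimate -/

lemma exists_KhatS_bound {b : ℕ} (hb : 1 < b) (s : ℕ) : ∃ C : ℝ, 0 ≤ C ∧ ∀ k l : Fin s → ℕ,
    ENNReal.ofReal ‖KhatS b 2 s k l‖
      ≤ ENNReal.ofReal C * ((∏ j, wt b (k j)) * ∏ j, wt b (l j)) := by
  obtain ⟨C, hC0, hC⟩ := exists_Khat_bound hb
  have hb0 : (0 : ℝ) < b := by exact_mod_cast (by omega : 0 < b)
  refine ⟨C ^ s, by positivity, fun k l => ?_⟩
  have hwt : ∀ x, wt b x = ENNReal.ofReal (((b : ℝ)⁻¹) ^ (lead b x + lead₂ b x)) := fun x => by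
    rw [wt, ENNReal.ofReal_pow (by positivity), ENNReal.ofReal_inv_of_pos hb0,
      ENNReal.ofReal_natCast]
  rw [KhatS_eq_prod, norm_prod, ← Finset.prod_mul_distrib,
    ENNReal.ofReal_prod_of_nonneg fun _ _ => norm_nonneg _, ENNReal.ofReal_pow hC0]
  have hcard : ENNReal.ofReal C ^ s = ∏ _j : Fin s, ENNReal.ofReal C := by simp
  rw [hcard, ← Finset.prod_mul_distrib]
  refine Finset.prod_le_prod' fun j _ => ?_
  rw [hwt, hwt, ← ENNReal.ofReal_mul (by positivity), ← ENNReal.ofReal_mul hC0]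
  exact ENNReal.ofReal_le_ofReal (hC _ _)

/-- The two one-sided estimates multiplied together: up to a constant they give
`m^{2s+1} b^{-6m}` with `m = gw`, because `β ≥ 4`. -/
lemma numeric_bound {b s β m : ℕ} (hb : 1 < b) (hβ : 4 ≤ β) (hm : 0 < m) {c Z₁ Z₂ : ℝ}
    (hc : 0 ≤ c) (hZ₁ : 0 ≤ Z₁) (hZ₂ : 0 ≤ Z₂) :
    c * ((s * ((b * (((β * m + 1 + 1 : ℕ) : ℝ) ^ 1 * (b : ℝ)⁻¹ ^ (β * m + 1) * Z₁))
          * (b * Z₁) ^ (s - 1))) *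
      ((b : ℝ) ^ (s + β * (s + 1)) * (((2 * m - 2 * (β * s) + 1 : ℕ) : ℝ) ^ (2 * s)
          * (b : ℝ)⁻¹ ^ (2 * m - 2 * (β * s)) * Z₂)))
    ≤ c * ((s * ((b * ((3 * β) * Z₁)) * (b * Z₁) ^ (s - 1))) *
      ((b : ℝ) ^ (s + β * (s + 1)) * (3 ^ (2 * s) * (b : ℝ) ^ (2 * (β * s)) * Z₂)))
      * (m : ℝ) ^ (2 * s + 1) / ((b : ℝ) ^ m) ^ 6 := by
  have hb0 : (0 : ℝ) < b := by exact_mod_cast (by omega : 0 < b)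
  have hb1 : (b : ℝ)⁻¹ ≤ 1 := inv_le_one_of_one_le₀ (by exact_mod_cast hb.le)
  have hi0 : (0 : ℝ) ≤ (b : ℝ)⁻¹ := by positivity
  have hβm : 4 * m ≤ β * m := Nat.mul_le_mul_right m hβ
  have h1 : ((β * m + 1 + 1 : ℕ) : ℝ) ^ 1 ≤ 3 * β * m := by
    rw [pow_one]
    have : β * m + 1 + 1 ≤ 3 * β * m := by rw [mul_assoc]; omega
    exact_mod_cast this
  have h2 : (b : ℝ)⁻¹ ^ (β * m + 1) ≤ (b : ℝ)⁻¹ ^ (4 * m) :=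
    pow_le_pow_of_le_one hi0 hb1 (by omega)
  have h3 : ((2 * m - 2 * (β * s) + 1 : ℕ) : ℝ) ≤ 3 * m := by
    have : 2 * m - 2 * (β * s) + 1 ≤ 3 * m := by omega
    exact_mod_cast this
  have h4 : (b : ℝ)⁻¹ ^ (2 * m - 2 * (β * s)) ≤ (b : ℝ) ^ (2 * (β * s)) * (b : ℝ)⁻¹ ^ (2 * m) := by
    have e : (b : ℝ)⁻¹ ^ (2 * m - 2 * (β * s))
        = (b : ℝ) ^ (2 * (β * s)) * (b : ℝ)⁻¹ ^ (2 * m - 2 * (β * s) + 2 * (β * s)) := by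
      rw [pow_add, inv_pow, inv_pow]; field_simp
    rw [e]
    gcongr ?_ * ?_
    exact pow_le_pow_of_le_one hi0 hb1 (by omega)
  calc _ ≤ c * ((s * ((b * ((3 * β * m) * (b : ℝ)⁻¹ ^ (4 * m) * Z₁)) * (b * Z₁) ^ (s - 1))) *
      ((b : ℝ) ^ (s + β * (s + 1)) * ((3 * m) ^ (2 * s)
          * ((b : ℝ) ^ (2 * (β * s)) * (b : ℝ)⁻¹ ^ (2 * m)) * Z₂))) := by gcongr
    _ = _ := by
      have e : (b : ℝ)⁻¹ ^ (4 * m) * (b : ℝ)⁻¹ ^ (2 * m) = (((b : ℝ) ^ m) ^ 6)⁻¹ := by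
        rw [← pow_add, inv_pow, ← pow_mul]; congr 2; ring
      rw [mul_pow, pow_succ (m : ℝ), div_eq_mul_inv, ← e]
      ring

/-- Proposition 2: the discretization part, `α = 2`. Under the
assumptions of the main theorem with `α = 2`, there is `A > 0` such that for all `w`, the
digital net `P` of the paper's construction with `N = b^{gw}` points satisfies
`∑_{k ∉ {0,…,b^{βgw}-1}^s} ∑_{l ∈ P∞⊥\{0}} |K̂_{2,s}(k,l)| ≤ A (log N)^{2s+1} / N^{6}`. -/
theorem discretization_part_bound_two
    (b s β g : ℕ) (hb : b.Prime) (hs : 0 < s) (hβ : 4 ≤ β)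
    (hg1 : 4 * s ≤ g) (hg2 : s * (β - 1) / 2 ≤ g) (hbs : β * g * s ≤ b)
    (βe : ℕ → ℕ → ZMod b)
    (hdist : ∀ j l j' l', j < β * s → l < g → j' < β * s → l' < g →
      βe j l = βe j' l' → j = j' ∧ l = l') :
    ∃ A : ℝ, 0 < A ∧ ∀ w : ℕ, 0 < w →
      (∑' p : {k : Fin s → ℕ // ¬ ∀ j, k j < b ^ (β * (g * w))} ×
          {l : Fin s → ℕ //
            l ∈ dualNetInf b (interlace β s (g * w) fun j => csMatrix b w (g * w) (βe j.1)) ∧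
            l ≠ 0},
          ‖KhatS b 2 s p.1.1 p.2.1‖) ≤
        A * Real.log ((b : ℝ) ^ (g * w)) ^ (2 * s + 1) / ((b : ℝ) ^ (g * w)) ^ 6 := by
  have hb1 := hb.one_lt
  obtain ⟨C, hC0, hC⟩ := exists_KhatS_bound hb1 s
  have hlog : 0 < Real.log b := Real.log_pos (by exact_mod_cast hb1)
  set Z₁ := (polyGeom b 1).toReal with hZ₁
  set Z₂ := (polyGeom b (2 * s)).toReal with hZ₂
  have hZ₁0 : 0 ≤ Z₁ := ENNReal.toReal_nonneg
  have hZ₂0 : 0 ≤ Z₂ := ENNReal.toReal_nonneg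
  have hZ₁t := polyGeom_ne_top hb1 1
  have hZ₂t := polyGeom_ne_top hb1 (2 * s)
  set A₀ := C * ((s * ((b * ((3 * β) * Z₁)) * (b * Z₁) ^ (s - 1))) *
      ((b : ℝ) ^ (s + β * (s + 1)) * (3 ^ (2 * s) * (b : ℝ) ^ (2 * (β * s)) * Z₂))) with hA₀
  have hA₀0 : 0 ≤ A₀ := by positivity
  refine ⟨A₀ / Real.log b ^ (2 * s + 1) + 1, by positivity, fun w hw => ?_⟩
  have hm : 0 < g * w := Nat.mul_pos (by omega) hw
  set m := g * w with hmdef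
  -- The sum over pairs, taken in `ℝ≥0∞`, factors into the two sums bounded before.
  have hsum := (ENNReal.tsum_le_tsum fun p : {k : Fin s → ℕ // ¬ ∀ j, k j < b ^ (β * m)} ×
      {l : Fin s → ℕ //
        l ∈ dualNetInf b (interlace β s m fun j => csMatrix b w m (βe j.1)) ∧ l ≠ 0} =>
      hC p.1.1 p.2.1)
  have hfac : ∀ {κ ι : Type} (u : κ → ℝ≥0∞) (v : ι → ℝ≥0∞),
      ∑' p : κ × ι, u p.1 * v p.2 = (∑' x, u x) * ∑' y, v y := by
    intro κ ι u v
    rw [ENNReal.tsum_prod']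
    simp only [ENNReal.tsum_mul_left, ENNReal.tsum_mul_right]
  rw [ENNReal.tsum_mul_left, hfac (fun k : {k : Fin s → ℕ // ¬ ∀ j, k j < b ^ (β * m)} =>
    ∏ j, wt b (k.1 j)) (fun l : {l : Fin s → ℕ //
        l ∈ dualNetInf b (interlace β s m fun j => csMatrix b w m (βe j.1)) ∧ l ≠ 0} =>
    ∏ j, wt b (l.1 j))] at hsum
  have hbd := hsum.trans (mul_le_mul_right (mul_le_mul' (tsum_outside_box_le hb1 s (β * m))
    (tsum_dual_le hb (by omega : 2 ≤ β) hw hdist)) _)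
  have hbinv : (b : ℝ≥0∞)⁻¹ ≠ ∞ := ENNReal.inv_ne_top.2 (by exact_mod_cast hb.ne_zero)
  have hc1 : (((β * m + 1 : ℕ) : ℝ≥0∞) + 1) = ((β * m + 1 + 1 : ℕ) : ℝ≥0∞) := by push_cast; rfl
  have hc2 : (((2 * m - 2 * (β * s) : ℕ) : ℝ≥0∞) + 1)
      = ((2 * m - 2 * (β * s) + 1 : ℕ) : ℝ≥0∞) := by rw [Nat.cast_add, Nat.cast_one]
  rw [hc1, ← hmdef, hc2] at hbd
  have hreal := ENNReal.toReal_mono (by finiteness) hbd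
  rw [ENNReal.tsum_toReal_eq fun _ => ENNReal.ofReal_ne_top] at hreal
  simp only [ENNReal.toReal_ofReal (norm_nonneg _), ENNReal.toReal_mul, ENNReal.toReal_pow,
    ENNReal.toReal_inv, ENNReal.toReal_natCast, ENNReal.toReal_ofReal hC0, ← hZ₁, ← hZ₂] at hreal
  refine (hreal.trans (numeric_bound hb1 hβ hm hC0 hZ₁0 hZ₂0)).trans ?_
  rw [← hA₀, Real.log_pow, mul_pow]
  have hle : A₀ * (m : ℝ) ^ (2 * s + 1) ≤ (A₀ / Real.log b ^ (2 * s + 1) + 1)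
      * ((m : ℝ) ^ (2 * s + 1) * Real.log b ^ (2 * s + 1)) := by
    have e : A₀ * (m : ℝ) ^ (2 * s + 1) = A₀ / Real.log b ^ (2 * s + 1)
        * ((m : ℝ) ^ (2 * s + 1) * Real.log b ^ (2 * s + 1)) := by field_simp
    rw [e]
    gcongr
    linarith
  gcongr
end

section
/- Let b be a prime, α ∈ ℕ with α ≥ 3, and n ∈ ℕ. With S_1 := ∑_{k=0}^{∞} b^{−μ_α(k)} and S_{2,n} := ∑_{k=0}^{b^n−1} b^{−μ_α(k)}, one has S_1 − S_{2,n} ≤ B_{α,b} / b^n, where B_{α,b} := ∑_{v=1}^{α−1} ∏_{i=1}^{v−1} (b−1)/(b^i−1) + ((b^{α−1}−1)/(b^{α−1}−b)) · ∏_{i=1}^{α−1} (b−1)/(b^i−1) (empty products equal 1). -/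
/-!
Write `q = 1/b` and `T_β(m) = ∑_{r < b^m} q^{μ_β(r)}` (`dickSum`). Splitting off the leading digit
of `k < b^(m+1)` gives the recursion `T_{β+1}(m+1) = T_{β+1}(m) + (b-1) q^{m+1} T_β(m)`
(`dickSum_succ`), with `T_0(m) = b^m`. Hence the tail beyond `b^n` is
`∑_{m ≥ n} (b-1) q^{m+1} T_{α-1}(m)`, and it suffices to bound `T_{α-1}(m)` by `B_{α,b}`
uniformly in `m`.

For that bound, consider the moments `∑_m q^{s m} T_β(m)`. Summation by parts in the recursion
expresses the moment with parameters `(β+1, s)` through the one with parameters `(β, s+1)`, down to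
a geometric series at `β = 0`. Solving this recursion gives `(1 - q^s) ∑_m q^{s m} T_β(m) ≤ D_β(s)`
with the explicit constant `D_β(s)` (`momentBound`), valid for `s ≥ 1` and `β + s ≥ 2`
(`moment_le`). Finally, the limit of `T_β` is at most `D_β(0)` for `β ≥ 2` (`dickSum_le`), and
`D_{α-1}(0)` is exactly `B_{α,b}`.
-/

open scoped BigOperators

/-! ### The Dick metric and the leading digit -/

lemma mem_bsupp {b : ℕ} (hb : 2 ≤ b) (k i : ℕ) : i ∈ bsupp b k ↔ k / b ^ i % b ≠ 0 := by
  rw [bsupp, Finset.mem_filter, Finset.mem_range, bdigit, and_iff_right_iff_imp]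
  intro h
  by_contra hi
  apply h
  have : i < b ^ i := Nat.lt_pow_self (by omega)
  rw [Nat.div_eq_of_lt (by omega), Nat.zero_mod]

lemma lt_of_mem_bsupp {b : ℕ} (hb : 2 ≤ b) {m r i : ℕ} (hr : r < b ^ m) (hi : i ∈ bsupp b r) :
    i < m := by
  rw [mem_bsupp hb] at hi
  by_contra h
  apply hi
  have : b ^ m ≤ b ^ i := Nat.pow_le_pow_right (by omega) (by omega)
  rw [Nat.div_eq_of_lt (by omega), Nat.zero_mod]

lemma bsupp_leading {b : ℕ} (hb : 2 ≤ b) {m r c : ℕ} (hr : r < b ^ m) (hc : 0 < c) (hcb : c < b) :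
    bsupp b (c * b ^ m + r) = insert m (bsupp b r) := by
  have hpos : 0 < b ^ m := by positivity
  ext i
  rw [Finset.mem_insert, mem_bsupp hb, mem_bsupp hb]
  rcases lt_trichotomy i m with h | h | h
  · obtain ⟨d, rfl⟩ : ∃ d, m = i + 1 + d := ⟨m - i - 1, by omega⟩
    have e : c * b ^ (i + 1 + d) + r = r + b ^ i * (b * (c * b ^ d)) := by ring
    rw [e, Nat.add_mul_div_left _ _ (by positivity), Nat.add_mul_mod_self_left]
    simp [h.ne]
  · subst h
    have e : (c * b ^ i + r) / b ^ i = c := by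
      rw [mul_comm, Nat.mul_add_div hpos, Nat.div_eq_of_lt hr, add_zero]
    rw [e, Nat.mod_eq_of_lt hcb]
    simp [hc.ne']
  · have h1 : b ^ (m + 1) ≤ b ^ i := Nat.pow_le_pow_right (by omega) h
    have h2 : c * b ^ m + r < b ^ (m + 1) := by
      have : (c + 1) * b ^ m ≤ b * b ^ m := Nat.mul_le_mul_right _ hcb
      rw [pow_succ']
      linarith
    have h3 : b ^ m ≤ b ^ (m + 1) := Nat.pow_le_pow_right (by omega) (by omega)
    rw [Nat.div_eq_of_lt (by omega), Nat.div_eq_of_lt (by omega)]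
    simp [h.ne']

lemma sort_insert_max {s : Finset ℕ} {m : ℕ} (h : ∀ i ∈ s, i < m) :
    (insert m s).sort (· ≤ ·) = s.sort (· ≤ ·) ++ [m] := by
  have hm : m ∉ s := fun hm => (h m hm).false
  refine List.Perm.eq_of_pairwise' (r := (· ≤ ·)) (Finset.pairwise_sort _ _) ?_ ?_
  · rw [List.pairwise_append]
    refine ⟨Finset.pairwise_sort _ _, by simp, ?_⟩
    intro x hx y hy
    rw [Finset.mem_sort] at hx
    rw [List.mem_singleton] at hy
    exact hy ▸ (h x hx).le
  · rw [List.perm_ext_iff_of_nodup (Finset.sort_nodup _ _)]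
    · intro x
      simp [or_comm]
    · rw [List.nodup_append]
      refine ⟨Finset.sort_nodup _ _, by simp, ?_⟩
      intro x hx y hy
      rw [Finset.mem_sort] at hx
      rw [List.mem_singleton] at hy
      exact hy ▸ (h x hx).ne

lemma dick_leading {b : ℕ} (hb : 2 ≤ b) (β : ℕ) {m r c : ℕ} (hr : r < b ^ m) (hc : 0 < c)
    (hcb : c < b) : dick b (β + 1) (c * b ^ m + r) = (m + 1) + dick b β r := by
  unfold dick
  rw [bsupp_leading hb hr hc hcb, sort_insert_max fun i hi => lt_of_mem_bsupp hb hr hi]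
  simp

/-! ### The partial sums over `k < b ^ m` -/

/-- The sum `T_β(m) = ∑_{k < b^m} b^{-μ_β(k)}`. -/
noncomputable def dickSum (b β m : ℕ) : ℝ :=
  ∑ k ∈ Finset.range (b ^ m), ((b : ℝ)⁻¹) ^ dick b β k

lemma dickSum_zero_left (b m : ℕ) : dickSum b 0 m = (b : ℝ) ^ m := by
  simp [dickSum, dick]

lemma dickSum_zero_right (b β : ℕ) : dickSum b β 0 = 1 := by
  simp [dickSum, dick, bsupp, bdigit]

lemma dickSum_nonneg (b β m : ℕ) : 0 ≤ dickSum b β m :=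
  Finset.sum_nonneg fun _ _ => by positivity

/-- Each nonzero leading digit at position `m` contributes one scaled copy of `T_β(m)`. -/
lemma dickSum_block {b : ℕ} (hb : 2 ≤ b) (β m j : ℕ) (hj : j < b) :
    ∑ k ∈ Finset.range ((j + 1) * b ^ m), ((b : ℝ)⁻¹) ^ dick b (β + 1) k
      = dickSum b (β + 1) m + j * ((b : ℝ)⁻¹ ^ (m + 1) * dickSum b β m) := by
  induction j with
  | zero => simp [dickSum]
  | succ j ih =>
    rw [add_mul (j + 1), one_mul, Finset.sum_range_add, ih (by omega)]
    have : ∑ x ∈ Finset.range (b ^ m), ((b : ℝ)⁻¹) ^ dick b (β + 1) ((j + 1) * b ^ m + x)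
        = (b : ℝ)⁻¹ ^ (m + 1) * dickSum b β m := by
      rw [dickSum, Finset.mul_sum]
      refine Finset.sum_congr rfl fun x hx => ?_
      rw [dick_leading hb β (Finset.mem_range.1 hx) (by omega) hj, pow_add]
    rw [this]
    push_cast
    ring

lemma dickSum_succ {b : ℕ} (hb : 2 ≤ b) (β m : ℕ) :
    dickSum b (β + 1) (m + 1)
      = dickSum b (β + 1) m + ((b : ℝ) - 1) * (b : ℝ)⁻¹ ^ (m + 1) * dickSum b β m := by
  have h := dickSum_block hb β m (b - 1) (by omega)
  rw [Nat.sub_add_cancel (by omega), ← pow_succ', Nat.cast_sub (by omega)] at h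
  rw [dickSum, h]
  push_cast
  ring

/-! ### Moments -/

/-- The constant `D_β(s)`, an explicit solution of
`D_{β+1}(s) = 1 + (b-1)/(b^{s+1}-1) · D_β(s+1)` and `D_0(s) = (b^s-1)/(b^s-b)`. -/
noncomputable def momentBound (b β s : ℕ) : ℝ :=
  ∑ v ∈ Finset.range β, ∏ i ∈ Finset.range v, ((b : ℝ) - 1) / ((b : ℝ) ^ (s + i + 1) - 1)
    + (((b : ℝ) ^ (s + β) - 1) / ((b : ℝ) ^ (s + β) - (b : ℝ))) *
      ∏ i ∈ Finset.range β, ((b : ℝ) - 1) / ((b : ℝ) ^ (s + i + 1) - 1)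

lemma momentBound_succ (b β s : ℕ) :
    momentBound b (β + 1) s
      = 1 + ((b : ℝ) - 1) / ((b : ℝ) ^ (s + 1) - 1) * momentBound b β (s + 1) := by
  have e (i : ℕ) : s + (i + 1) + 1 = s + 1 + i + 1 := by ring
  have e2 : s + (β + 1) = s + 1 + β := by ring
  simp only [momentBound, Finset.sum_range_succ', Finset.prod_range_succ', e, e2,
    Finset.prod_range_zero, ← Finset.sum_mul, add_zero]
  ring

/-- The moment bound `(1 - q^s) ∑_{m<M} q^{s m} T_β(m) ≤ D_β(s)`, where `q = 1/b`. -/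
lemma moment_le {b : ℕ} (hb : 2 ≤ b) (β : ℕ) : ∀ s, 1 ≤ s → 2 ≤ β + s → ∀ M,
    (1 - (b : ℝ)⁻¹ ^ s) * ∑ m ∈ Finset.range M, ((b : ℝ)⁻¹ ^ s) ^ m * dickSum b β m
      ≤ momentBound b β s := by
  have hbR : (2 : ℝ) ≤ b := by exact_mod_cast hb
  have hb0 : (0 : ℝ) < b := by linarith
  have hq0 : 0 < (b : ℝ)⁻¹ := by positivity
  have hq1 : (b : ℝ)⁻¹ < 1 := inv_lt_one_of_one_lt₀ (by linarith)
  induction β with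
  | zero =>
    intro s _ hs M
    obtain ⟨t, rfl⟩ : ∃ t, s = t + 1 + 1 := ⟨s - 2, by omega⟩
    have hp : (b : ℝ)⁻¹ ^ (t + 1) < 1 := pow_lt_one₀ hq0.le hq1 (by omega)
    have hp2 : (b : ℝ)⁻¹ ^ (t + 1 + 1) < 1 := pow_lt_one₀ hq0.le hq1 (by omega)
    have hterm (m : ℕ) : ((b : ℝ)⁻¹ ^ (t + 1 + 1)) ^ m * dickSum b 0 m
        = ((b : ℝ)⁻¹ ^ (t + 1)) ^ m := by
      rw [dickSum_zero_left, ← mul_pow, pow_succ _ (t + 1), mul_assoc, inv_mul_cancel₀ hb0.ne',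
        mul_one]
    simp only [hterm]
    have hgeo : ∑ m ∈ Finset.range M, ((b : ℝ)⁻¹ ^ (t + 1)) ^ m ≤ (1 - (b : ℝ)⁻¹ ^ (t + 1))⁻¹ := by
      rw [← tsum_geometric_of_lt_one (by positivity) hp]
      exact (summable_geometric_of_lt_one (by positivity) hp).sum_le_tsum _
        fun _ _ => by positivity
    refine (mul_le_mul_of_nonneg_left hgeo (by linarith)).trans_eq ?_
    have h1 : (1 : ℝ) < (b : ℝ) ^ (t + 1) := one_lt_pow₀ (by linarith) (by omega)
    have h2 : (b : ℝ) ^ (t + 1 + 1) - b ≠ 0 := by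
      have : (b : ℝ) ^ (t + 1 + 1) - b = b * ((b : ℝ) ^ (t + 1) - 1) := by ring
      rw [this]
      exact mul_ne_zero hb0.ne' (by linarith)
    have h3 : 1 - (b : ℝ)⁻¹ ^ (t + 1) ≠ 0 := by linarith
    have h4 : (b : ℝ) ^ (t + 1) * (b : ℝ)⁻¹ ^ (t + 1) = 1 := by
      rw [← mul_pow, mul_inv_cancel₀ hb0.ne', one_pow]
    have h5 : (b : ℝ) * (b : ℝ)⁻¹ = 1 := mul_inv_cancel₀ hb0.ne'
    simp only [momentBound, Finset.range_zero, Finset.sum_empty, Finset.prod_empty, mul_one,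
      zero_add, add_zero]
    rw [← div_eq_mul_inv, div_eq_div_iff h3 h2, pow_succ _ (t + 1), pow_succ _ (t + 1)]
    generalize (b : ℝ)⁻¹ ^ (t + 1) = x at *
    generalize (b : ℝ) ^ (t + 1) = y at *
    generalize (b : ℝ)⁻¹ = z at *
    linear_combination (-(y * x) + x) * h5 + (b - 1) * h4
  | succ β ih =>
    intro s hs1 _ M
    have hD := ih (s + 1) (by omega) (by omega) M
    rw [momentBound_succ]
    have hp : (b : ℝ)⁻¹ ^ (s + 1) < 1 := pow_lt_one₀ hq0.le hq1 (by omega)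
    set S := ∑ m ∈ Finset.range M, ((b : ℝ)⁻¹ ^ s) ^ m * dickSum b (β + 1) m with hS
    set R := ∑ m ∈ Finset.range M, ((b : ℝ)⁻¹ ^ (s + 1)) ^ m * dickSum b β m with hR
    -- summation by parts: compare the sums over `m < M` and `m < M + 1`
    have hle : S ≤ ∑ m ∈ Finset.range (M + 1), ((b : ℝ)⁻¹ ^ s) ^ m * dickSum b (β + 1) m := by
      rw [Finset.sum_range_succ]
      have : 0 ≤ ((b : ℝ)⁻¹ ^ s) ^ M * dickSum b (β + 1) M :=
        mul_nonneg (by positivity) (dickSum_nonneg _ _ _)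
      linarith
    have heq : ∑ m ∈ Finset.range (M + 1), ((b : ℝ)⁻¹ ^ s) ^ m * dickSum b (β + 1) m
        = (b : ℝ)⁻¹ ^ s * S + ((b : ℝ) - 1) * (b : ℝ)⁻¹ ^ (s + 1) * R + 1 := by
      rw [Finset.sum_range_succ', dickSum_zero_right, hS, hR, Finset.mul_sum, Finset.mul_sum,
        ← Finset.sum_add_distrib]
      congr 1
      · refine Finset.sum_congr rfl fun m _ => ?_
        rw [dickSum_succ hb]
        ring
      · simp
    have hcoef : ((b : ℝ) - 1) / ((b : ℝ) ^ (s + 1) - 1) * (1 - (b : ℝ)⁻¹ ^ (s + 1))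
        = ((b : ℝ) - 1) * (b : ℝ)⁻¹ ^ (s + 1) := by
      have h1 : (1 : ℝ) < (b : ℝ) ^ (s + 1) := one_lt_pow₀ (by linarith) (by omega)
      have h2 : (b : ℝ) ^ (s + 1) - 1 ≠ 0 := by linarith
      have h4 : (b : ℝ) ^ (s + 1) * (b : ℝ)⁻¹ ^ (s + 1) = 1 := by
        rw [← mul_pow, mul_inv_cancel₀ hb0.ne', one_pow]
      rw [div_mul_eq_mul_div, div_eq_iff h2]
      linear_combination (-((b : ℝ) - 1)) * h4
    have hc0 : 0 ≤ ((b : ℝ) - 1) / ((b : ℝ) ^ (s + 1) - 1) := by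
      have h1 : (1 : ℝ) < (b : ℝ) ^ (s + 1) := one_lt_pow₀ (by linarith) (by omega)
      exact div_nonneg (by linarith) (by linarith)
    have hfin := mul_le_mul_of_nonneg_left hD hc0
    rw [← mul_assoc, hcoef] at hfin
    linarith

/-- The uniform bound on `T_β(m)`, whose right-hand side is the limit of `T_β`. It needs `β ≥ 2`,
since `T_0` and `T_1` are unbounded. -/
lemma dickSum_le {b : ℕ} (hb : 2 ≤ b) (β m : ℕ) :
    dickSum b (β + 2) m ≤ momentBound b (β + 2) 0 := by
  have hbR : (2 : ℝ) ≤ b := by exact_mod_cast hb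
  have hb0 : (0 : ℝ) < b := by linarith
  have hexp : dickSum b (β + 2) m = 1 + ((b : ℝ) - 1) * (b : ℝ)⁻¹ *
      ∑ i ∈ Finset.range m, ((b : ℝ)⁻¹ ^ 1) ^ i * dickSum b (β + 1) i := by
    induction m with
    | zero => simp [dickSum_zero_right]
    | succ m ih =>
      rw [dickSum_succ hb, ih, Finset.sum_range_succ]
      ring
  have hM := moment_le hb (β + 1) 1 le_rfl (by omega) m
  have h1 : ((b : ℝ) - 1) * (b : ℝ)⁻¹ = 1 - (b : ℝ)⁻¹ ^ 1 := by
    field_simp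
  have h2 : ((b : ℝ) - 1) / ((b : ℝ) ^ (0 + 1) - 1) = 1 := by
    rw [zero_add, pow_one, div_self (by linarith)]
  rw [momentBound_succ, h2, hexp, h1]
  linarith

/-! ### The tail -/

lemma dickSum_tail {b : ℕ} (hb : 2 ≤ b) (β n N : ℕ) :
    dickSum b (β + 3) (n + N) ≤ dickSum b (β + 3) n
      + momentBound b (β + 2) 0 * ((b : ℝ)⁻¹ ^ n - (b : ℝ)⁻¹ ^ (n + N)) := by
  have hbR : (2 : ℝ) ≤ b := by exact_mod_cast hb
  have hb0 : (0 : ℝ) < b := by linarith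
  induction N with
  | zero => simp
  | succ N ih =>
    rw [← add_assoc, dickSum_succ hb]
    have h1 : ((b : ℝ) - 1) * (b : ℝ)⁻¹ ^ (n + N + 1)
        = (b : ℝ)⁻¹ ^ (n + N) - (b : ℝ)⁻¹ ^ (n + N + 1) := by
      rw [pow_succ]
      field_simp
    have h0 : 0 ≤ ((b : ℝ) - 1) * (b : ℝ)⁻¹ ^ (n + N + 1) :=
      mul_nonneg (by linarith) (by positivity)
    have h2 := mul_le_mul_of_nonneg_left (dickSum_le hb β (n + N)) h0
    rw [h1] at h2 ⊢
    linarith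

lemma momentBound_zero (b β : ℕ) : momentBound b β 0
    = ∑ v ∈ Finset.Icc 1 β, ∏ i ∈ Finset.Icc 1 (v - 1), ((b : ℝ) - 1) / ((b : ℝ) ^ i - 1)
      + (((b : ℝ) ^ β - 1) / ((b : ℝ) ^ β - (b : ℝ))) *
          ∏ i ∈ Finset.Icc 1 β, ((b : ℝ) - 1) / ((b : ℝ) ^ i - 1) := by
  have hp (v : ℕ) : ∏ i ∈ Finset.Icc 1 v, ((b : ℝ) - 1) / ((b : ℝ) ^ i - 1)
      = ∏ i ∈ Finset.range v, ((b : ℝ) - 1) / ((b : ℝ) ^ (i + 1) - 1) := by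
    rw [Finset.range_eq_Ico, Finset.prod_Ico_add' (fun i => ((b : ℝ) - 1) / ((b : ℝ) ^ i - 1)) 0 v 1]
    rfl
  have hs (f : ℕ → ℝ) : ∑ v ∈ Finset.Icc 1 β, f (v - 1) = ∑ v ∈ Finset.range β, f v := by
    have h := Finset.sum_Ico_add' (fun v => f (v - 1)) 0 β 1
    simp only [Nat.add_sub_cancel] at h
    rw [Finset.range_eq_Ico, h]
    rfl
  simp only [hp]
  rw [hs fun v => ∏ i ∈ Finset.range v, ((b : ℝ) - 1) / ((b : ℝ) ^ (i + 1) - 1)]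
  simp only [momentBound, zero_add]

/-- For a prime `b`, `α ≥ 3` and `n ∈ ℕ`, with `S_1 = ∑_{k≥0} b^{-μ_α(k)}`
and `S_{2,n} = ∑_{k<b^n} b^{-μ_α(k)}`, one has `S_1 - S_{2,n} ≤ B_{α,b}/b^n` where
`B_{α,b} = ∑_{v=1}^{α-1} ∏_{i=1}^{v-1} (b-1)/(b^i-1)
  + ((b^{α-1}-1)/(b^{α-1}-b)) ∏_{i=1}^{α-1} (b-1)/(b^i-1)`. -/
theorem tail_sum_bound (b α n : ℕ) (hb : b.Prime) (hα : 3 ≤ α) (hn : 0 < n) :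
    (∑' k : ℕ, (b : ℝ) ^ (-(dick b α k : ℝ))) -
      ∑ k ∈ Finset.range (b ^ n), (b : ℝ) ^ (-(dick b α k : ℝ)) ≤
    (∑ v ∈ Finset.Icc 1 (α - 1),
        ∏ i ∈ Finset.Icc 1 (v - 1), ((b : ℝ) - 1) / ((b : ℝ) ^ i - 1)
      + (((b : ℝ) ^ (α - 1) - 1) / ((b : ℝ) ^ (α - 1) - (b : ℝ))) *
          ∏ i ∈ Finset.Icc 1 (α - 1), ((b : ℝ) - 1) / ((b : ℝ) ^ i - 1)) / (b : ℝ) ^ n := by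
  have hb2 : 2 ≤ b := hb.two_le
  have hbR : (2 : ℝ) ≤ b := by exact_mod_cast hb2
  obtain ⟨β, rfl⟩ : ∃ β, α = β + 3 := ⟨α - 3, by omega⟩
  have hterm (k : ℕ) : (b : ℝ) ^ (-(dick b (β + 3) k : ℝ)) = (b : ℝ)⁻¹ ^ dick b (β + 3) k := by
    rw [Real.rpow_neg (by positivity), Real.rpow_natCast, inv_pow]
  simp only [hterm]
  rw [show β + 3 - 1 = β + 2 by omega, ← momentBound_zero, sub_le_iff_le_add', div_eq_mul_inv,
    ← inv_pow]
  refine Real.tsum_le_of_sum_range_le (fun k => by positivity) fun K => ?_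
  have hK : K ≤ b ^ (n + K) :=
    (Nat.lt_pow_self (by omega)).le.trans (Nat.pow_le_pow_right (by omega) (by omega : K ≤ n + K))
  have h1 : ∑ k ∈ Finset.range K, (b : ℝ)⁻¹ ^ dick b (β + 3) k ≤ dickSum b (β + 3) (n + K) :=
    Finset.sum_le_sum_of_subset_of_nonneg (Finset.range_mono hK) fun _ _ _ => by positivity
  have h2 := dickSum_tail hb2 β n K
  have h3 : 0 ≤ momentBound b (β + 2) 0 * (b : ℝ)⁻¹ ^ (n + K) :=
    mul_nonneg ((dickSum_nonneg b _ 0).trans (dickSum_le hb2 β 0)) (by positivity)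
  rw [mul_sub] at h2
  change _ ≤ dickSum b (β + 3) n + _
  linarith
end

section
/- Let b ≥ 2 be an integer and v, n ∈ ℕ. Then ∑ b^{−(a_1 + ... + a_v)}, where the sum ranges over all integer tuples with a_1 > a_2 > ... > a_v > 0 and a_1 > n, is at most (1/(b^n (b−1))) · ∏_{i=1}^{v−1} 1/(b^i − 1) (empty product equal 1). -/
open scoped BigOperators

/-!
Split off the largest entry: a tuple in the sum is determined by `a_1 > n` and by the strictly
decreasing positive tuple `(a_2, …, a_v)`. Forgetting the condition `a_1 > a_2` bounds the sum by
the product of `∑_{a > n} b^{-a} = 1 / (b^n (b - 1))` and the sum of `b^{-(a_1 + ⋯ + a_k)}` over all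
strictly decreasing positive `k`-tuples, `k = v - 1`.

The latter is at most (in fact equal to) `∏_{i=1}^k 1 / (b^i - 1)` (`decreasing_sum_le`), by
induction on `k`: subtracting the smallest entry `m + 1` of a `(k+1)`-tuple from all the others leaves
a strictly decreasing positive `k`-tuple and costs the factor `b^{-(k+1)(m+1)}`, which sums over
`m ≥ 0` to `1 / (b^{k+1} - 1)`.

Both steps only need an injection into a product index set (`tsum_le_mul_of_injective`), since all
terms are nonnegative.
-/

/-- The strictly decreasing `k`-tuples of positive integers. -/
abbrev DecTuple (k : ℕ) : Type := {a : Fin k → ℕ // StrictAnti a ∧ ∀ i, 0 < a i}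

/-- A nonnegative sum whose terms factor along an injection into a product is at most the product
of the two sums. -/
lemma tsum_le_mul_of_injective {α β γ : Type*} {f : α → ℝ} {g : β → ℝ} {h : γ → ℝ} {G H : ℝ}
    (e : α → β × γ) (he : Function.Injective e) (hf : ∀ a, f a = g (e a).1 * h (e a).2)
    (hg0 : ∀ x, 0 ≤ g x) (hh0 : ∀ x, 0 ≤ h x)
    (hg : Summable g ∧ ∑' x, g x ≤ G) (hh : Summable h ∧ ∑' x, h x ≤ H) :
    Summable f ∧ ∑' a, f a ≤ G * H := by
  have hs : Summable fun p : β × γ => g p.1 * h p.2 := hg.1.mul_of_nonneg hh.1 hg0 hh0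
  have hfe : f = (fun p : β × γ => g p.1 * h p.2) ∘ e := funext hf
  refine ⟨hfe ▸ hs.comp_injective he, ?_⟩
  calc ∑' a, f a ≤ ∑' p : β × γ, g p.1 * h p.2 := by
        rw [hfe]
        exact tsum_comp_le_tsum_of_inj hs (fun p => mul_nonneg (hg0 _) (hh0 _)) he
    _ = (∑' x, g x) * ∑' y, h y := (hg.1.tsum_mul_tsum hh.1 hs).symm
    _ ≤ G * H := mul_le_mul hg.2 hh.2 (tsum_nonneg hh0) ((tsum_nonneg hg0).trans hg.2)

lemma geom_sum_le {b : ℝ} (hb : 2 ≤ b) (k : ℕ) :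
    (Summable fun m : ℕ => b⁻¹ ^ ((k + 1) * (m + 1))) ∧
      ∑' m : ℕ, b⁻¹ ^ ((k + 1) * (m + 1)) ≤ 1 / (b ^ (k + 1) - 1) := by
  have h1 : 1 < b ^ (k + 1) := one_lt_pow₀ (by linarith) (by omega)
  have hr : (b ^ (k + 1))⁻¹ < 1 := inv_lt_one_of_one_lt₀ h1
  have hs := (hasSum_geometric_of_lt_one (by positivity) hr).mul_left (b ^ (k + 1))⁻¹
  have hfun : (fun m : ℕ => b⁻¹ ^ ((k + 1) * (m + 1))) =
      fun m : ℕ => (b ^ (k + 1))⁻¹ * (b ^ (k + 1))⁻¹ ^ m := by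
    funext m
    rw [pow_mul, inv_pow, pow_succ']
  rw [hfun]
  refine ⟨hs.summable, hs.tsum_eq.trans_le (le_of_eq ?_)⟩
  have h2 : b ^ (k + 1) - 1 ≠ 0 := by linarith
  have h3 : b ^ (k + 1) ≠ 0 := by positivity
  rw [← mul_inv, mul_sub, mul_inv_cancel₀ h3, mul_one, one_div]

lemma geom_tail_le {b : ℝ} (hb : 2 ≤ b) (n : ℕ) :
    (Summable fun m : ℕ => b⁻¹ ^ (n + 1 + m)) ∧
      ∑' m : ℕ, b⁻¹ ^ (n + 1 + m) ≤ 1 / (b ^ n * (b - 1)) := by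
  have hr : b⁻¹ < 1 := inv_lt_one_of_one_lt₀ (by linarith)
  have hs := (hasSum_geometric_of_lt_one (by positivity) hr).mul_left (b⁻¹ ^ (n + 1))
  simp only [← pow_add] at hs
  refine ⟨hs.summable, hs.tsum_eq.trans_le (le_of_eq ?_)⟩
  have h3 : b ≠ 0 := by positivity
  rw [inv_pow, ← mul_inv, pow_succ, mul_assoc, mul_sub, mul_inv_cancel₀ h3, mul_one, one_div]

lemma decreasing_sum_le {b : ℝ} (hb : 2 ≤ b) (k : ℕ) :
    (Summable fun t : DecTuple k => b⁻¹ ^ (∑ i, t.1 i)) ∧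
      ∑' t : DecTuple k, b⁻¹ ^ (∑ i, t.1 i) ≤ ∏ i ∈ Finset.Icc 1 k, 1 / (b ^ i - 1) := by
  have hq : 0 ≤ b⁻¹ := by positivity
  induction k with
  | zero =>
    have : Unique (DecTuple 0) :=
      { default := ⟨Fin.elim0, fun i => i.elim0, fun i => i.elim0⟩
        uniq := fun t => Subtype.ext (funext fun i => i.elim0) }
    exact ⟨(hasSum_fintype _).summable, by simp⟩
  | succ k ih =>
    rw [Finset.prod_Icc_succ_top (by omega)]
    have hlast : ∀ (t : DecTuple (k + 1)) (i : Fin k), t.1 (Fin.last k) < t.1 i.castSucc :=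
      fun t i => t.2.1 (Fin.castSucc_lt_last i)
    have hanti : ∀ t : DecTuple (k + 1),
        StrictAnti fun i : Fin k => t.1 i.castSucc - t.1 (Fin.last k) := by
      intro t i j hij
      have h1 := t.2.1 (Fin.castSucc_lt_castSucc_iff.2 hij)
      have h2 := hlast t j
      show t.1 j.castSucc - _ < t.1 i.castSucc - _
      omega
    refine tsum_le_mul_of_injective (α := DecTuple (k + 1))
      (fun t => (⟨fun i => t.1 i.castSucc - t.1 (Fin.last k), hanti t,
          fun i => Nat.sub_pos_of_lt (hlast t i)⟩,
        t.1 (Fin.last k) - 1)) ?_ ?_ (fun _ => pow_nonneg hq _) (fun _ => pow_nonneg hq _)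
      ih (geom_sum_le hb k)
    · intro s t hst
      simp only [Prod.mk.injEq, Subtype.mk.injEq] at hst
      obtain ⟨h1, h2⟩ := hst
      have hs := s.2.2 (Fin.last k)
      have ht := t.2.2 (Fin.last k)
      refine Subtype.ext (funext fun i => ?_)
      refine Fin.lastCases ?_ (fun i => ?_) i
      · omega
      · have h3 := congrFun h1 i
        have h4 := hlast s i
        have h5 := hlast t i
        omega
    · intro t
      rw [← pow_add, Fin.sum_univ_castSucc]
      congr 1
      have h1 : ∑ i : Fin k, t.1 i.castSucc =
          ∑ i : Fin k, (t.1 i.castSucc - t.1 (Fin.last k)) + k * t.1 (Fin.last k) := by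
        have h2 : k * t.1 (Fin.last k) = ∑ _i : Fin k, t.1 (Fin.last k) := by simp
        rw [h2, ← Finset.sum_add_distrib]
        exact Finset.sum_congr rfl fun i _ => (Nat.sub_add_cancel (hlast t i).le).symm
      rw [h1]
      simp only [Nat.sub_add_cancel (t.2.2 (Fin.last k))]
      ring

/-- For an integer `b ≥ 2` and `v, n ∈ ℕ`, the sum of `b^{-(a_1+⋯+a_v)}`
over all strictly decreasing tuples `a_1 > a_2 > ⋯ > a_v > 0` of positive integers with
`a_1 > n` is at most `(1/(b^n(b-1))) ∏_{i=1}^{v-1} 1/(b^i-1)`. -/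
theorem decreasing_tuple_sum_bound (b v n : ℕ) (hb : 2 ≤ b) (hv : 0 < v) (hn : 0 < n) :
    (∑' t : {a : Fin v → ℕ // StrictAnti a ∧ (∀ i, 0 < a i) ∧ n < a ⟨0, hv⟩},
        (b : ℝ) ^ (-(∑ i, (t.1 i : ℝ)))) ≤
      1 / ((b : ℝ) ^ n * ((b : ℝ) - 1)) *
        ∏ i ∈ Finset.Icc 1 (v - 1), 1 / ((b : ℝ) ^ i - 1) := by
  obtain ⟨k, rfl⟩ : ∃ k, v = k + 1 := ⟨v - 1, by omega⟩
  have hb' : (2 : ℝ) ≤ b := by exact_mod_cast hb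
  have hq : 0 ≤ (b : ℝ)⁻¹ := by positivity
  have hpos : ∀ t : {a : Fin (k + 1) → ℕ // StrictAnti a ∧ (∀ i, 0 < a i) ∧ n < a ⟨0, hv⟩},
      n < t.1 0 := fun t => t.2.2.2
  refine (tsum_le_mul_of_injective
    (fun t => (t.1 0 - (n + 1), (⟨fun i => t.1 i.succ, fun i j hij => ?_, fun i => ?_⟩ :
      DecTuple k))) ?_ ?_ (fun _ => pow_nonneg hq _) (fun _ => pow_nonneg hq _)
    (geom_tail_le hb' n) (decreasing_sum_le hb' k)).2
  · exact t.2.1 (Fin.succ_lt_succ_iff.2 hij)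
  · exact t.2.2.1 _
  · intro s t hst
    simp only [Prod.mk.injEq, Subtype.mk.injEq] at hst
    obtain ⟨h1, h2⟩ := hst
    have hs := hpos s
    have ht := hpos t
    refine Subtype.ext (funext fun i => ?_)
    refine Fin.cases ?_ (fun i => congrFun h2 i) i
    omega
  · intro t
    have h0 := hpos t
    rw [← pow_add, Real.rpow_neg (by positivity), ← Nat.cast_sum, Real.rpow_natCast, ← inv_pow,
      Fin.sum_univ_succ]
    congr 1
    simp only
    omega
end

section
/- Let b ≥ 2 be an integer, α, v, n ∈ ℕ with 2 ≤ α ≤ v. Then ∑ b^{−(a_1 + ... + a_α)}, where the sum ranges over all integer tuples with a_1 > a_2 > ... > a_v > 0 and a_1 > n, is at most (1/(b^n (b−1))) · (∏_{i=1}^{α−1} 1/(b^i − 1)) · (1/(b^{α−1} − 1))^{v−α}. -/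
open scoped BigOperators

/-!
For a fixed leading entry `a_1 > n`, forget the constraint `a_2 < a_1` and describe the tail
`a_2 > ⋯ > a_v > 0` by its gaps `a_i - a_{i+1} ≥ 1` (with `a_{v+1} = 0`). Summation by parts gives
`a_1 + ⋯ + a_α = a_1 + ∑_{i ≥ 2} min (i - 1) (α - 1) * (a_i - a_{i+1})`
(`gap_sum`), so each term of the series is a product of powers in the independent coordinates
`(a_1, gaps)`. These coordinates determine the tuple (`coord_injective`), hence every finite
partial sum is bounded by a sum over a box, which factors into geometric sums
(`geom_Ioc_le`). Their values are exactly the factors of the claimed bound.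

Indices in the code start at `0`.
-/

namespace DecreasingTuple

/-- A tuple of length `v`, extended by zero to all of `ℕ`. -/
def ext {v : ℕ} (a : Fin v → ℕ) (j : ℕ) : ℕ := if h : j < v then a ⟨j, h⟩ else 0

/-- The coordinates of a tuple: its leading entry, followed by the gaps of its tail. -/
def coord {v : ℕ} (a : Fin v → ℕ) (i : Fin v) : ℕ :=
  if i.1 = 0 then ext a 0 else ext a i.1 - ext a (i.1 + 1)

/-- The multiplicity with which the `i`-th coordinate enters the sum of the `α` largest
entries; `c` stands for `α - 1`. -/
def mult (c i : ℕ) : ℕ := if i = 0 then 1 else min i c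

/-- The strict lower bound on the `i`-th coordinate. -/
def low (n i : ℕ) : ℕ := if i = 0 then n else 0

lemma ext_lt {v : ℕ} {a : Fin v → ℕ} (ha : StrictAnti a) (hp : ∀ i, 0 < a i) {j : ℕ}
    (hj : j < v) : ext a (j + 1) < ext a j := by
  unfold ext
  rw [dif_pos hj]
  split_ifs with h
  · exact ha (by simp [Fin.lt_def])
  · exact hp _

lemma ext_antitone {v : ℕ} {a : Fin v → ℕ} (ha : StrictAnti a) (hp : ∀ i, 0 < a i) :
    Antitone (ext a) := by
  refine antitone_nat_of_succ_le fun j => ?_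
  by_cases hj : j < v
  · exact (ext_lt ha hp hj).le
  · simp [ext, show ¬ j + 1 < v by omega]

lemma ext_of_le {v : ℕ} (a : Fin v → ℕ) {j : ℕ} (hj : v ≤ j) : ext a j = 0 := by
  simp [ext, not_lt.2 hj]

/-- Summation by parts for the truncated tail sum of an antitone sequence. -/
lemma gap_sum (A : ℕ → ℕ) (hA : Antitone A) (c w : ℕ) :
    ∑ i ∈ Finset.range w, min (i + 1) c * (A (i + 1) - A (i + 2)) + min w c * A (w + 1) =
      ∑ i ∈ Finset.range w, if i < c then A (i + 1) else 0 := by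
  induction w with
  | zero => simp
  | succ w ih =>
    rw [Finset.sum_range_succ, Finset.sum_range_succ, ← ih]
    obtain ⟨d, hd⟩ := Nat.exists_eq_add_of_le (hA (show w + 1 ≤ w + 2 by omega))
    rw [show w + 1 + 1 = w + 2 from rfl, hd, Nat.add_sub_cancel_left]
    split_ifs with h
    · rw [min_eq_left (show w + 1 ≤ c by omega), min_eq_left h.le]; ring
    · rw [min_eq_right (show c ≤ w + 1 by omega), min_eq_right (not_lt.1 h)]; ring

lemma sum_mult_coord {v α : ℕ} (hv : 0 < v) (hα : 2 ≤ α) {a : Fin v → ℕ}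
    (ha : StrictAnti a) (hp : ∀ i, 0 < a i) :
    ∑ i : Fin v with i.1 < α, a i = ∑ i : Fin v, mult (α - 1) i * coord a i := by
  obtain ⟨w, rfl⟩ : ∃ w, v = w + 1 := ⟨v - 1, by omega⟩
  have h1 : ∑ i : Fin (w + 1) with i.1 < α, a i =
      ∑ i ∈ Finset.range (w + 1), if i < α then ext a i else 0 := by
    rw [Finset.sum_filter, ← Fin.sum_univ_eq_sum_range (fun i => if i < α then ext a i else 0)]
    exact Finset.sum_congr rfl fun i _ => by simp [ext, Nat.le_of_lt_succ i.2]
  have h2 : ∑ i : Fin (w + 1), mult (α - 1) i * coord a i =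
      ∑ i ∈ Finset.range (w + 1),
        mult (α - 1) i * (if i = 0 then ext a 0 else ext a i - ext a (i + 1)) :=
    Fin.sum_univ_eq_sum_range
      (fun i => mult (α - 1) i * (if i = 0 then ext a 0 else ext a i - ext a (i + 1))) (w + 1)
  have h3 := gap_sum (ext a) (ext_antitone ha hp) (α - 1) w
  rw [ext_of_le a le_rfl, mul_zero, add_zero] at h3
  rw [h1, h2, Finset.sum_range_succ', Finset.sum_range_succ']
  simp only [mult, Nat.add_eq_zero_iff, one_ne_zero, and_false, if_false, if_true, one_mul,
    show 0 < α by omega]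
  rw [h3]
  congr 1
  refine Finset.sum_congr rfl fun i _ => ?_
  simp only [show i + 1 < α ↔ i < α - 1 by omega]

lemma coord_mem {v n N : ℕ} (hv : 0 < v) {a : Fin v → ℕ}
    (ha : StrictAnti a) (hp : ∀ i, 0 < a i) (hn : n < a ⟨0, hv⟩) (hN : a ⟨0, hv⟩ ≤ N)
    (i : Fin v) : coord a i ∈ Finset.Ioc (low n i) N := by
  have h0 : ext a 0 = a ⟨0, hv⟩ := by simp [ext, hv]
  have h1 := ext_lt ha hp i.2
  have h2 := ext_antitone ha hp (Nat.zero_le i.1)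
  rw [Finset.mem_Ioc]
  unfold coord low
  split_ifs <;> omega

/-- A tuple is recovered from its coordinates by summing gaps from the bottom up. -/
lemma coord_injective {v : ℕ} {a a' : Fin v → ℕ} (ha : StrictAnti a) (hp : ∀ i, 0 < a i)
    (ha' : StrictAnti a') (hp' : ∀ i, 0 < a' i) (h : coord a = coord a') : a = a' := by
  have key : ∀ k j, j + k = v → ext a j = ext a' j := by
    intro k
    induction k with
    | zero => intro j hj; rw [ext_of_le a (by omega), ext_of_le a' (by omega)]
    | succ k ih =>
      intro j hj
      have e := congrFun h ⟨j, by omega⟩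
      have e1 := ih (j + 1) (by omega)
      have l := ext_lt ha hp (show j < v by omega)
      have l' := ext_lt ha' hp' (show j < v by omega)
      simp only [coord] at e
      split_ifs at e with hj0
      · subst hj0; exact e
      · omega
  funext i
  have := key (v - i) i (by omega)
  simpa [ext] using this

lemma geom_Ioc_le (x : ℝ) (hx : 1 < x) (n N : ℕ) :
    ∑ k ∈ Finset.Ioc n N, (x ^ k)⁻¹ ≤ 1 / (x ^ n * (x - 1)) := by
  have hx1 : 0 < x - 1 := by linarith
  have hx0 : 0 < x := by linarith
  rcases le_total N n with h | h
  · rw [Finset.Ioc_eq_empty (by omega), Finset.sum_empty]; positivity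
  · have : ∑ k ∈ Finset.Ioc n N, (x ^ k)⁻¹ = 1 / (x ^ n * (x - 1)) - 1 / (x ^ N * (x - 1)) := by
      induction N, h using Nat.le_induction with
      | base => simp
      | succ N hN ih =>
        rw [Finset.sum_Ioc_succ_top hN, ih]
        field_simp
        ring
    rw [this]
    have : 0 < 1 / (x ^ N * (x - 1)) := by positivity
    linarith

end DecreasingTuple

open DecreasingTuple in
/-- For an integer `b ≥ 2` and `α, v, n ∈ ℕ` with `2 ≤ α ≤ v`, the sum
of `b^{-(a_1+⋯+a_α)}` over all strictly decreasing tuples `a_1 > a_2 > ⋯ > a_v > 0` of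
positive integers with `a_1 > n` (only the `α` largest entries appear in the exponent) is
at most `(1/(b^n(b-1))) (∏_{i=1}^{α-1} 1/(b^i-1)) (1/(b^{α-1}-1))^{v-α}`. -/
theorem decreasing_tuple_partial_sum_bound (b α v n : ℕ) (hb : 2 ≤ b) (hα : 2 ≤ α)
    (hv : 0 < v) (hαv : α ≤ v) (hn : 0 < n) :
    (∑' t : {a : Fin v → ℕ // StrictAnti a ∧ (∀ i, 0 < a i) ∧ n < a ⟨0, hv⟩},
        (b : ℝ) ^ (-(∑ i ∈ Finset.univ.filter fun i : Fin v => i.1 < α, (t.1 i : ℝ)))) ≤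
      1 / ((b : ℝ) ^ n * ((b : ℝ) - 1)) *
        (∏ i ∈ Finset.Icc 1 (α - 1), 1 / ((b : ℝ) ^ i - 1)) *
        (1 / ((b : ℝ) ^ (α - 1) - 1)) ^ (v - α) := by
  have hb1 : (1 : ℝ) < b := by exact_mod_cast hb
  have hb0 : (0 : ℝ) < b := by linarith
  have hm : ∀ i, 1 < (b : ℝ) ^ mult (α - 1) i := fun i =>
    one_lt_pow₀ hb1 (by unfold mult; split_ifs <;> omega)
  -- Each term is a product over the coordinates.
  have hterm : ∀ a : Fin v → ℕ, StrictAnti a → (∀ i, 0 < a i) →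
      (b : ℝ) ^ (-(∑ i ∈ Finset.univ.filter fun i : Fin v => i.1 < α, (a i : ℝ))) =
        ∏ i : Fin v, (((b : ℝ) ^ mult (α - 1) i) ^ coord a i)⁻¹ := by
    intro a ha hp
    rw [Real.rpow_neg hb0.le, ← Nat.cast_sum, Real.rpow_natCast, sum_mult_coord hv hα ha hp,
      Finset.prod_inv_distrib]
    simp_rw [← pow_mul]
    rw [Finset.prod_pow_eq_pow_sum]
  -- The stated bound is the product of the values of the geometric series.
  have hbound : ∏ i : Fin v, 1 / (((b : ℝ) ^ mult (α - 1) i) ^ low n i *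
        ((b : ℝ) ^ mult (α - 1) i - 1)) =
      1 / ((b : ℝ) ^ n * ((b : ℝ) - 1)) *
        (∏ i ∈ Finset.Icc 1 (α - 1), 1 / ((b : ℝ) ^ i - 1)) *
        (1 / ((b : ℝ) ^ (α - 1) - 1)) ^ (v - α) := by
    rw [Fin.prod_univ_eq_prod_range (fun i => 1 / (((b : ℝ) ^ mult (α - 1) i) ^ low n i *
        ((b : ℝ) ^ mult (α - 1) i - 1))) v, show v = ((α - 1) + (v - α)) + 1 by omega,
      Finset.prod_range_succ', Finset.prod_range_add, mul_comm, ← mul_assoc]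
    congr 1
    · congr 1
      · simp [mult, low]
      · rw [Finset.range_eq_Ico, Finset.prod_Ico_add'
          (fun i => 1 / (((b : ℝ) ^ mult (α - 1) i) ^ low n i *
            ((b : ℝ) ^ mult (α - 1) i - 1))) 0 (α - 1) 1]
        refine Finset.prod_congr (by ext i; simp only [Finset.mem_Ico, Finset.mem_Icc]; omega) fun i hi => ?_
        rw [Finset.mem_Icc] at hi
        simp [mult, low, show i ≠ 0 by omega, hi.2]
    · rw [Finset.prod_congr rfl (g := fun _ => 1 / ((b : ℝ) ^ (α - 1) - 1))]
      · rw [Finset.prod_const, Finset.card_range]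
        congr 1
        omega
      · intro i _
        simp [mult, low, show min (α - 1 + i + 1) (α - 1) = α - 1 by omega]
  rw [← hbound]
  refine Real.tsum_le_of_sum_le (fun t => by positivity) fun s => ?_
  set N := s.sup fun t => t.1 ⟨0, hv⟩ with hN
  calc _ = ∑ t ∈ s, ∏ i : Fin v, (((b : ℝ) ^ mult (α - 1) i) ^ coord t.1 i)⁻¹ :=
        Finset.sum_congr rfl fun t _ => hterm t.1 t.2.1 t.2.2.1
    _ = ∑ e ∈ s.image fun t => coord t.1,
          ∏ i : Fin v, (((b : ℝ) ^ mult (α - 1) i) ^ e i)⁻¹ := by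
        rw [Finset.sum_image]
        intro t _ t' _ h
        exact Subtype.ext (coord_injective t.2.1 t.2.2.1 t'.2.1 t'.2.2.1 h)
    _ ≤ ∑ e ∈ Fintype.piFinset fun i : Fin v => Finset.Ioc (low n i) N,
          ∏ i : Fin v, (((b : ℝ) ^ mult (α - 1) i) ^ e i)⁻¹ := by
        refine Finset.sum_le_sum_of_subset_of_nonneg ?_ fun _ _ _ => by positivity
        intro e he
        obtain ⟨t, ht, rfl⟩ := Finset.mem_image.1 he
        rw [Fintype.mem_piFinset]
        exact coord_mem hv t.2.1 t.2.2.1 t.2.2.2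
          (Finset.le_sup (f := fun t : {a : Fin v → ℕ // StrictAnti a ∧ (∀ i, 0 < a i) ∧
            n < a ⟨0, hv⟩} => t.1 ⟨0, hv⟩) ht)
    _ = ∏ i : Fin v, ∑ k ∈ Finset.Ioc (low n i) N, (((b : ℝ) ^ mult (α - 1) i) ^ k)⁻¹ := by
        rw [Finset.prod_univ_sum]
    _ ≤ _ := Finset.prod_le_prod (fun _ _ => Finset.sum_nonneg fun _ _ => by positivity)
        fun i _ => geom_Ioc_le _ (hm i) _ _
end
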